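/- arXiv:0911.3565 — 2 statements merged into one kernel-verified Lean document; each statement's English description precedes it below -/
import Mathlib

section
/- Let m > n ≥ 1. The following are equivalent for a local K-algebra A: (a) A is an Artinian Gorenstein local ring with Hilbert function {1,m,n,1}; (b) A is isomorphic as a K-algebra to A_F, where F = F_3 + y_{n+1}^2 + ⋯ + y_m^2 ∈ K[y_1,…,y_m] and F_3 is a non-degenerate homogeneous form of degree three in the variables y_1,…,y_n. -/
/-- The contraction (derivative) action of the power series ring
`R = K[[x_1,…,x_n]]` on the polynomial ring `P = K[y_1,…,y_n]`:
`f ∘ g = f(∂/∂y_1, …, ∂/∂y_n)(g)`.  It is defined on the monomial basis by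
`x^α ∘ y^β = (∏ i, (β i)!/(β i - α i)!) y^(β-α)` (zero unless `α ≤ β`), the honest
iterated partial derivative, and extended `K`-linearly. -/
noncomputable def contract {K : Type*} [Field K] {n : ℕ} (f : MvPowerSeries (Fin n) K) :
    MvPolynomial (Fin n) K →ₗ[K] MvPolynomial (Fin n) K :=
  (MvPolynomial.basisMonomials (Fin n) K).constr K fun β =>
    ∑ α ∈ Finset.Iic β,
      (MvPowerSeries.coeff α f * ∏ i, ((β i).descFactorial (α i) : K)) •
        MvPolynomial.monomial (β - α) (1 : K)

theorem contract_add {K : Type*} [Field K] {n : ℕ} (f g : MvPowerSeries (Fin n) K) :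
    contract (f + g) = contract f + contract g := by
  unfold contract
  rw [← map_add]
  congr 1
  funext β
  simp only [Pi.add_apply]
  rw [← Finset.sum_add_distrib]
  exact Finset.sum_congr rfl fun α _ => by rw [map_add, add_mul, add_smul]

theorem contract_zero {K : Type*} [Field K] {n : ℕ} :
    contract (0 : MvPowerSeries (Fin n) K) = 0 := by
  unfold contract
  convert map_zero ((MvPolynomial.basisMonomials (Fin n) K).constr
    (M' := MvPolynomial (Fin n) K) K) using 2
  funext β
  simp

/-- The annihilator `Ann_R(F) = Ann_R(⟨F⟩_R)` of (the cyclic `R`-submodule of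
`P` generated by) a polynomial `F` under the contraction action; an ideal of
`R = K[[x_1,…,x_n]]`.  The Artinian Gorenstein local algebra associated to `F`
is `A_F = R ⧸ annR F`. -/
noncomputable def annR {K : Type*} [Field K] {n : ℕ} (F : MvPolynomial (Fin n) K) :
    Ideal (MvPowerSeries (Fin n) K) where
  carrier := {f | ∀ u : MvPowerSeries (Fin n) K, contract (u * f) F = 0}
  zero_mem' := fun u => by rw [mul_zero, contract_zero]; rfl
  add_mem' := fun {a b} ha hb u => by
    rw [mul_add, contract_add, LinearMap.add_apply, ha u, hb u, add_zero]
  smul_mem' := fun c f hf u => by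
    rw [smul_eq_mul, ← mul_assoc]; exact hf (u * c)

/-- The linear form `l 1 • x_1 + ⋯ + l n • x_n` in `R = K[[x_1,…,x_n]]`. -/
noncomputable def linForm {K : Type*} [Field K] {n : ℕ} (l : Fin n → K) :
    MvPowerSeries (Fin n) K :=
  ∑ i, MvPowerSeries.monomial (Finsupp.single i 1) (l i)

/-- A polynomial `F ∈ K[y_1,…,y_n]` is non-degenerate if `Ann_R(F)` contains no
nonzero linear form; equivalently, the embedding dimension of `A_F` is `n`,
i.e. `HF_{A_F}(1) = n`. -/
def nondegenerate {K : Type*} [Field K] {n : ℕ} (F : MvPolynomial (Fin n) K) : Prop :=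
  ∀ l : Fin n → K, linForm l ∈ annR F → l = 0

/-- The Hilbert function
`HF_A(i) = dim_K (m^i/m^(i+1)) = dim_K A/m^(i+1) - dim_K A/m^i`
of a local `K`-algebra `A` with maximal ideal `m`. -/
noncomputable def hilbLoc (K : Type*) [Field K] (A : Type*) [CommRing A] [IsLocalRing A]
    [Algebra K A] (i : ℕ) : ℕ :=
  Module.finrank K (A ⧸ (IsLocalRing.maximalIdeal A ^ (i + 1))) -
    Module.finrank K (A ⧸ (IsLocalRing.maximalIdeal A ^ i))

/-- `dim_K` of the socle `(0 : m)` of a local `K`-algebra `A`;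
an Artinian local ring `A` is Gorenstein iff this equals `1`. -/
noncomputable def socDimLoc (K : Type*) [Field K] (A : Type*) [CommRing A] [IsLocalRing A]
    [Algebra K A] : ℕ :=
  Module.finrank K
    ((Submodule.colon (⊥ : Ideal A) (IsLocalRing.maximalIdeal A)).restrictScalars K)

/-- The residue field of the local `K`-algebra `A` is `K` itself,
via the structure map. -/
def residueFieldIsK (K : Type*) [Field K] (A : Type*) [CommRing A] [IsLocalRing A]
    [Algebra K A] : Prop :=
  Function.Bijective (algebraMap K (IsLocalRing.ResidueField A))

noncomputable def ffac (K : Type*) [Field K] {m : ℕ} (γ : Fin m →₀ ℕ) : K :=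
  ∏ i, ((γ i).factorial : K)

theorem ffac_ne_zero {K : Type*} [Field K] [CharZero K] {m : ℕ} (γ : Fin m →₀ ℕ) :
    ffac K γ ≠ 0 :=
  Finset.prod_ne_zero_iff.2 fun i _ => by exact_mod_cast (γ i).factorial_ne_zero

noncomputable def LL {K : Type*} [Field K] {m : ℕ} (F : MvPolynomial (Fin m) K) :
    MvPowerSeries (Fin m) K →ₗ[K] K :=
  ∑ β ∈ F.support, (MvPolynomial.coeff β F * ffac K β) • MvPowerSeries.coeff β

theorem LL_apply {K : Type*} [Field K] {m : ℕ} (F : MvPolynomial (Fin m) K)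
    (f : MvPowerSeries (Fin m) K) :
    LL F f = ∑ β ∈ F.support, MvPolynomial.coeff β F * ffac K β * MvPowerSeries.coeff β f := by
  simp [LL, LinearMap.sum_apply]

theorem LL_monomial {K : Type*} [Field K] {m : ℕ} (F : MvPolynomial (Fin m) K)
    (γ : Fin m →₀ ℕ) (c : K) :
    LL F (MvPowerSeries.monomial γ c) = c * (ffac K γ * MvPolynomial.coeff γ F) := by
  classical
  rw [LL_apply]
  simp only [MvPowerSeries.coeff_monomial]
  rw [Finset.sum_eq_single γ]
  · simp; ring
  · intro b _ hb; simp [hb]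
  · intro h; simp at h; simp [h]

theorem contract_monomial {K : Type*} [Field K] {m : ℕ} (f : MvPowerSeries (Fin m) K)
    (β : Fin m →₀ ℕ) :
    contract f (MvPolynomial.monomial β 1) = ∑ α ∈ Finset.Iic β,
      (MvPowerSeries.coeff α f * ∏ i, ((β i).descFactorial (α i) : K)) •
        MvPolynomial.monomial (β - α) (1 : K) := by
  have := (MvPolynomial.basisMonomials (Fin m) K).constr_basis K (fun β =>
    ∑ α ∈ Finset.Iic β,
      (MvPowerSeries.coeff α f * ∏ i, ((β i).descFactorial (α i) : K)) •
        MvPolynomial.monomial (β - α) (1 : K)) β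
  rw [MvPolynomial.coe_basisMonomials] at this
  exact this

theorem coeff_contract_monomial {K : Type*} [Field K] {m : ℕ} (f : MvPowerSeries (Fin m) K)
    (β γ : Fin m →₀ ℕ) :
    MvPolynomial.coeff γ (contract f (MvPolynomial.monomial β 1)) * ffac K γ =
      ffac K β * MvPowerSeries.coeff β (MvPowerSeries.monomial γ 1 * f) := by
  classical
  rw [contract_monomial, MvPolynomial.coeff_sum, MvPowerSeries.coeff_monomial_mul]
  simp only [MvPolynomial.coeff_smul, MvPolynomial.coeff_monomial, smul_eq_mul]
  split_ifs with h
  · rw [Finset.sum_eq_single (β - γ)]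
    · rw [if_pos (tsub_tsub_cancel_of_le h)]
      have : ffac K β = (∏ i, ((β i).descFactorial ((β - γ) i) : K)) * ffac K γ := by
        unfold ffac
        rw [← Finset.prod_mul_distrib]
        refine Finset.prod_congr rfl fun i _ => ?_
        have hi := h i
        have := Nat.factorial_mul_descFactorial (n := β i) (k := β i - γ i) (Nat.sub_le _ _)
        rw [Nat.sub_sub_self hi] at this
        rw [Finsupp.tsub_apply, ← this]; push_cast; ring
      rw [this]; ring
    · intro b hb hne
      rw [if_neg, mul_zero]
      rintro rfl
      exact hne (tsub_tsub_cancel_of_le (Finset.mem_Iic.1 hb)).symm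
    · intro hh; exact absurd (Finset.mem_Iic.2 tsub_le_self) hh
  · rw [mul_zero, Finset.sum_eq_zero, zero_mul]
    intro b hb
    rw [if_neg, mul_zero]
    rintro rfl
    exact h tsub_le_self

theorem coeff_contract {K : Type*} [Field K] {m : ℕ} (f : MvPowerSeries (Fin m) K)
    (F : MvPolynomial (Fin m) K) (γ : Fin m →₀ ℕ) :
    MvPolynomial.coeff γ (contract f F) * ffac K γ =
      LL F (MvPowerSeries.monomial γ 1 * f) := by
  conv_lhs => rw [F.as_sum]
  rw [map_sum, MvPolynomial.coeff_sum, Finset.sum_mul, LL_apply]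
  refine Finset.sum_congr rfl fun β _ => ?_
  have : MvPolynomial.monomial β (MvPolynomial.coeff β F) =
      MvPolynomial.coeff β F • MvPolynomial.monomial β (1 : K) := by
    rw [MvPolynomial.smul_monomial]; simp
  rw [this, map_smul, MvPolynomial.coeff_smul, smul_eq_mul, mul_assoc, coeff_contract_monomial]
  ring

theorem mem_annR_iff {K : Type*} [Field K] [CharZero K] {m : ℕ} (f : MvPowerSeries (Fin m) K)
    (F : MvPolynomial (Fin m) K) : f ∈ annR F ↔ ∀ u, LL F (u * f) = 0 := by
  have h0 : f ∈ annR F ↔ ∀ u, contract (u * f) F = 0 := Iff.rfl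
  rw [h0]
  constructor
  · intro h u
    have := coeff_contract (u * f) F 0
    rw [h u] at this
    simpa [MvPowerSeries.monomial_zero_one] using this.symm
  · intro h u
    ext γ
    have := coeff_contract (u * f) F γ
    rw [← mul_assoc, h] at this
    simpa [ffac_ne_zero] using this

theorem exists_bound {K : Type*} [Field K] {m : ℕ} (F : MvPolynomial (Fin m) K) :
    ∃ N : Fin m →₀ ℕ, ∀ β ∈ F.support, β ≤ N :=
  ⟨∑ β ∈ F.support, β, fun _ hβ => Finset.single_le_sum (f := fun β => β) (fun _ _ => zero_le) hβ⟩

theorem LL_mul_trunc {K : Type*} [Field K] {m : ℕ} (F : MvPolynomial (Fin m) K)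
    (N : Fin m →₀ ℕ) (hN : ∀ β ∈ F.support, β ≤ N) (u f : MvPowerSeries (Fin m) K) :
    LL F (u * (MvPowerSeries.trunc' K N f : MvPolynomial (Fin m) K)) = LL F (u * f) := by
  classical
  rw [LL_apply, LL_apply]
  refine Finset.sum_congr rfl fun β hβ => ?_
  congr 1
  rw [MvPowerSeries.coeff_mul, MvPowerSeries.coeff_mul]
  refine Finset.sum_congr rfl fun x hx => ?_
  rw [MvPolynomial.coeff_coe, MvPowerSeries.coeff_trunc', if_pos]
  refine le_trans ?_ (hN β hβ)
  rw [← Finset.HasAntidiagonal.mem_antidiagonal.1 hx]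
  exact le_add_self

theorem mem_annR_iff_poly {K : Type*} [Field K] [CharZero K] {m : ℕ}
    (f : MvPowerSeries (Fin m) K)
    (F : MvPolynomial (Fin m) K) :
    f ∈ annR F ↔ ∀ u : MvPolynomial (Fin m) K, LL F ((u : MvPowerSeries (Fin m) K) * f) = 0 := by
  rw [mem_annR_iff]
  refine ⟨fun h u => h _, fun h u => ?_⟩
  obtain ⟨N, hN⟩ := exists_bound F
  rw [mul_comm, ← LL_mul_trunc F N hN, mul_comm]
  exact h _

theorem mem_annR_iff_mon {K : Type*} [Field K] [CharZero K] {m : ℕ}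
    (f : MvPowerSeries (Fin m) K)
    (F : MvPolynomial (Fin m) K) :
    f ∈ annR F ↔ ∀ γ, LL F (MvPowerSeries.monomial γ 1 * f) = 0 := by
  rw [mem_annR_iff_poly]
  refine ⟨fun h u => by simpa using h (MvPolynomial.monomial u 1), fun h u => ?_⟩
  induction u using MvPolynomial.induction_on' with
  | monomial γ c =>
    have : ((MvPolynomial.monomial γ c : MvPolynomial (Fin m) K) : MvPowerSeries (Fin m) K) =
      c • MvPowerSeries.monomial γ 1 := by
      rw [MvPolynomial.coe_monomial, ← map_smul, smul_eq_mul, mul_one]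
    rw [this, smul_mul_assoc, map_smul, h, smul_zero]
  | add p q hp hq => rw [MvPolynomial.coe_add, add_mul, map_add, hp, hq, add_zero]

theorem sub_trunc_mem {K : Type*} [Field K] [CharZero K] {m : ℕ} (F : MvPolynomial (Fin m) K)
    (f : MvPowerSeries (Fin m) K) :
    ∃ p : MvPolynomial (Fin m) K, f - (p : MvPowerSeries (Fin m) K) ∈ annR F := by
  obtain ⟨N, hN⟩ := exists_bound F
  refine ⟨MvPowerSeries.trunc' K N f, (mem_annR_iff _ _).2 fun u => ?_⟩
  rw [mul_sub, map_sub, LL_mul_trunc F N hN, sub_self]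

/-- the map from polynomials to the quotient -/
noncomputable def toQ {K : Type*} [Field K] {m : ℕ} (F : MvPolynomial (Fin m) K) :
    MvPolynomial (Fin m) K →ₐ[K] (MvPowerSeries (Fin m) K ⧸ annR F) :=
  (Ideal.Quotient.mkₐ K (annR F)).comp (MvPolynomial.coeToMvPowerSeries.algHom K)

theorem toQ_apply {K : Type*} [Field K] {m : ℕ} (F p : MvPolynomial (Fin m) K) :
    toQ F p = Ideal.Quotient.mk (annR F) (p : MvPowerSeries (Fin m) K) := by
  simp [toQ, MvPolynomial.coeToMvPowerSeries.algHom_apply]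

theorem toQ_surj {K : Type*} [Field K] [CharZero K] {m : ℕ} (F : MvPolynomial (Fin m) K) :
    Function.Surjective (toQ F) := by
  intro x
  obtain ⟨f, rfl⟩ := Ideal.Quotient.mk_surjective x
  obtain ⟨p, hp⟩ := sub_trunc_mem F f
  exact ⟨p, by rw [toQ_apply]; exact ((Ideal.Quotient.mk_eq_mk_iff_sub_mem _ _).2 hp).symm⟩

def DataFor {K : Type*} [Field K] {m : ℕ} (F : MvPolynomial (Fin m) K)
    {A : Type*} [CommRing A] [Algebra K A] (t : Fin m → A) (φ : A →ₗ[K] K) : Prop :=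
  Function.Surjective (MvPolynomial.aeval (R := K) t) ∧
    (∀ a, (∀ b, φ (a * b) = 0) → a = 0) ∧
    ∀ γ : Fin m →₀ ℕ, φ (∏ i, t i ^ γ i) = ffac K γ * MvPolynomial.coeff γ F

theorem phi_aeval {K : Type*} [Field K] {m : ℕ} (F : MvPolynomial (Fin m) K)
    {A : Type*} [CommRing A] [Algebra K A] (t : Fin m → A) (φ : A →ₗ[K] K)
    (h : ∀ γ : Fin m →₀ ℕ, φ (∏ i, t i ^ γ i) = ffac K γ * MvPolynomial.coeff γ F)
    (p : MvPolynomial (Fin m) K) :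
    φ (MvPolynomial.aeval t p) = LL F (p : MvPowerSeries (Fin m) K) := by
  induction p using MvPolynomial.induction_on' with
  | monomial γ c =>
    rw [MvPolynomial.coe_monomial, LL_monomial, MvPolynomial.aeval_monomial, ← h,
      ← Algebra.smul_def, map_smul, smul_eq_mul, Finsupp.prod_fintype]
    simp
  | add p q hp hq => simp [hp, hq]

theorem iso_of_data {K : Type*} [Field K] [CharZero K] {m : ℕ} (F : MvPolynomial (Fin m) K)
    {A : Type*} [CommRing A] [Algebra K A] (t : Fin m → A) (φ : A →ₗ[K] K)
    (h : DataFor F t φ) : Nonempty (A ≃ₐ[K] (MvPowerSeries (Fin m) K ⧸ annR F)) := by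
  obtain ⟨hs, hnd, hF⟩ := h
  have hker : RingHom.ker (MvPolynomial.aeval (R := K) t) = RingHom.ker (toQ F) := by
    ext p
    rw [RingHom.mem_ker, RingHom.mem_ker, toQ_apply, Ideal.Quotient.eq_zero_iff_mem,
      mem_annR_iff_poly]
    constructor
    · intro hp u
      rw [← MvPolynomial.coe_mul, ← phi_aeval F t φ hF, map_mul, hp, mul_zero, map_zero]
    · intro hp
      apply hnd
      intro b
      obtain ⟨u, rfl⟩ := hs b
      rw [← map_mul, phi_aeval F t φ hF, mul_comm, MvPolynomial.coe_mul, hp]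
  exact ⟨((Ideal.quotientKerAlgEquivOfSurjective hs).symm.trans
    (Ideal.quotientEquivAlgOfEq K hker)).trans (Ideal.quotientKerAlgEquivOfSurjective (toQ_surj F))⟩

theorem data_of_iso {K : Type*} [Field K] [CharZero K] {m : ℕ} (F : MvPolynomial (Fin m) K)
    {A : Type*} [CommRing A] [Algebra K A]
    (e : A ≃ₐ[K] (MvPowerSeries (Fin m) K ⧸ annR F)) :
    ∃ (t : Fin m → A) (φ : A →ₗ[K] K), DataFor F t φ := by
  let φ0 : (MvPowerSeries (Fin m) K ⧸ annR F) →ₗ[K] K :=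
    (((annR F).restrictScalars K).liftQ (LL F) (fun f hf => by
      have := (mem_annR_iff f F).1 hf 1
      simpa using this)).comp
      (Submodule.Quotient.restrictScalarsEquiv K (annR F)).symm.toLinearMap
  have hφ0 : ∀ f, φ0 (Ideal.Quotient.mk (annR F) f) = LL F f := fun f => rfl
  let π : MvPolynomial (Fin m) K →ₐ[K] A := e.symm.toAlgHom.comp (toQ F)
  have hπ : Function.Surjective π := e.symm.surjective.comp (toQ_surj F)
  let t : Fin m → A := fun i => π (MvPolynomial.X i)
  have hπt : MvPolynomial.aeval t = π := by
    apply MvPolynomial.algHom_ext; intro i; simp [t]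
  let φ : A →ₗ[K] K := φ0.comp e.toLinearMap
  have hφ : ∀ p, φ (π p) = LL F (p : MvPowerSeries (Fin m) K) := by
    intro p
    simp only [φ, π, LinearMap.comp_apply]
    simp [toQ_apply, hφ0]
  refine ⟨t, φ, by rw [hπt]; exact hπ, ?_, ?_⟩
  · intro a ha
    obtain ⟨p, rfl⟩ := hπ a
    have : toQ F p = 0 := by
      rw [toQ_apply, Ideal.Quotient.eq_zero_iff_mem, mem_annR_iff_poly]
      intro u
      have := ha (π u)
      rwa [← map_mul, hφ, mul_comm, MvPolynomial.coe_mul] at this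
    simp [π, this]
  · intro γ
    have h1 : ∏ i, t i ^ γ i = π (MvPolynomial.monomial γ 1) := by
      rw [← hπt, MvPolynomial.aeval_monomial, Finsupp.prod_fintype] <;> simp
    rw [h1, hφ, MvPolynomial.coe_monomial, LL_monomial, one_mul]


open IsLocalRing in
theorem nondeg_of_socle {K : Type*} [Field K] {A : Type*} [CommRing A] [IsLocalRing A]
    [Algebra K A] (h4 : maximalIdeal A ^ 4 = ⊥) (φ : A →ₗ[K] K)
    (hs : ∀ s : A, (∀ x ∈ maximalIdeal A, s * x = 0) → φ s = 0 → s = 0) :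
    ∀ a, (∀ b, φ (a * b) = 0) → a = 0 := by
  have key : ∀ k : ℕ, ∀ a : A, (∀ y ∈ maximalIdeal A ^ k, a * y = 0) →
      (∀ b, φ (a * b) = 0) → a = 0 := by
    intro k
    induction k with
    | zero => intro a ha _; simpa using ha 1 (by simp)
    | succ k ih =>
      intro a ha hb
      apply hs a
      · intro x hx
        apply ih
        · intro y hy
          rw [mul_assoc]
          apply ha
          rw [pow_succ']
          exact Ideal.mul_mem_mul hx hy
        · intro b; rw [mul_assoc]; exact hb _
      · simpa using hb 1
  intro a ha
  refine key 4 a ?_ ha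
  intro y hy
  rw [h4] at hy
  rw [(Submodule.mem_bot A).1 hy, mul_zero]

noncomputable def Bf {K : Type*} [Field K] {A : Type*} [CommRing A]
    [Algebra K A] (φ : A →ₗ[K] K) : LinearMap.BilinForm K A := (LinearMap.mul K A).compr₂ φ

theorem Bf_apply {K : Type*} [Field K] {A : Type*} [CommRing A]
    [Algebra K A] (φ : A →ₗ[K] K) (a b : A) : Bf φ a b = φ (a * b) := rfl

theorem Bf_symm {K : Type*} [Field K] {A : Type*} [CommRing A]
    [Algebra K A] (φ : A →ₗ[K] K) : LinearMap.IsSymm (Bf φ) :=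
  ⟨fun a b => by simp [Bf_apply, mul_comm]⟩

theorem Bf_refl {K : Type*} [Field K] {A : Type*} [CommRing A]
    [Algebra K A] (φ : A →ₗ[K] K) : LinearMap.IsRefl (Bf φ) :=
  fun a b => by rw [Bf_apply, Bf_apply, mul_comm]; exact id

theorem Bf_nondeg {K : Type*} [Field K] {A : Type*} [CommRing A]
    [Algebra K A] (φ : A →ₗ[K] K) (h : ∀ a, (∀ b, φ (a * b) = 0) → a = 0) :
    (Bf φ).Nondegenerate :=
  ⟨fun a ha => h a ha, fun a ha => h a fun b => by rw [mul_comm]; exact ha b⟩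

theorem relcompl {K V : Type*} [Field K] [AddCommGroup V] [Module K V] (N U : Submodule K V)
    (h : N ≤ U) : ∃ T ≤ U, N ⊔ T = U ∧ N ⊓ T = ⊥ := by
  obtain ⟨C, hC⟩ := N.exists_isCompl
  refine ⟨C ⊓ U, inf_le_right, ?_, ?_⟩
  · rw [← sup_inf_assoc_of_le C h, hC.sup_eq_top, top_inf_eq]
  · rw [← inf_assoc, hC.inf_eq_bot, bot_inf_eq]

theorem exists_z {K V : Type*} [Field K] [IsAlgClosed K] [CharZero K] [AddCommGroup V] [Module K V]
    [FiniteDimensional K V]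
    (B : LinearMap.BilinForm K V) (hB : LinearMap.IsSymm B) (N W : Submodule K V) (hNW : N ≤ W)
    (h1 : ∀ w ∈ W, (∀ w' ∈ W, B w w' = 0) → w ∈ N) (h2 : ∀ w ∈ W, ∀ x ∈ N, B w x = 0)
    (k : ℕ) (hk : Module.finrank K W = Module.finrank K N + k) :
    ∃ z : Fin k → V, (∀ i, z i ∈ W) ∧ (∀ i j, B (z i) (z j) = if i = j then 2 else 0) ∧
      W ≤ Submodule.span K (Set.range z) ⊔ N := by
  obtain ⟨Z, hZW, hsup, hinf⟩ := relcompl N W hNW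
  have hfZ : Module.finrank K Z = k := by
    have := Submodule.finrank_sup_add_finrank_inf_eq N Z
    rw [hsup, hinf, finrank_bot] at this
    omega
  have hrefl : B.IsRefl := hB.isRefl
  have hnd : (B.restrict Z).Nondegenerate := by
    apply B.nondegenerate_restrict_of_disjoint_orthogonal hrefl
    rw [Submodule.disjoint_def]
    intro x hx hx'
    have : x ∈ N ⊓ Z := by
      refine ⟨h1 x (hZW hx) ?_, hx⟩
      intro w' hw'
      rw [← hsup] at hw'
      obtain ⟨y, hy, z, hz, rfl⟩ := Submodule.mem_sup.1 hw'
      rw [map_add, h2 x (hZW hx) y hy, zero_add]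
      exact hrefl _ _ (LinearMap.BilinForm.mem_orthogonal_iff.1 hx' z hz)
    rw [hinf] at this
    exact (Submodule.mem_bot K).1 this
  have : Invertible (2 : K) := invertibleOfNonzero two_ne_zero
  have hsymm : LinearMap.IsSymm (B.restrict Z) := ⟨fun a b => hB.eq a b⟩
  obtain ⟨v, hv⟩ := LinearMap.BilinForm.exists_orthogonal_basis hsymm
  subst hfZ
  have hne := LinearMap.BilinForm.iIsOrtho.not_isOrtho_basis_self_of_nondegenerate hv hnd
  have hc : ∀ i, ∃ c : K, c ^ 2 = 2 / (B.restrict Z) (v i) (v i) := fun i =>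
    IsAlgClosed.exists_pow_nat_eq _ two_pos
  choose c hc using hc
  have hc0 : ∀ i, c i ≠ 0 := by
    intro i h0
    have := hc i
    rw [h0, zero_pow two_ne_zero] at this
    exact div_ne_zero two_ne_zero (hne i) this.symm
  refine ⟨fun i => c i • (v i : V), fun i => W.smul_mem _ (hZW (v i).2), ?_, ?_⟩
  · intro i j
    rw [map_smul, map_smul, LinearMap.smul_apply]
    split_ifs with hij
    · subst hij
      have h3 : B (v i) (v i) ≠ 0 := hne i
      have h4 : c i ^ 2 = 2 / B (v i) (v i) := hc i
      rw [smul_eq_mul, smul_eq_mul, ← mul_assoc, ← pow_two, h4, div_mul_cancel₀ _ h3]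
    · have h3 : B (v i) (v j) = 0 := hv hij
      rw [h3, smul_zero, smul_zero]
  · rw [← hsup, sup_comm]
    refine sup_le_sup_right ?_ _
    intro x hx
    have h5 := v.sum_repr ⟨x, hx⟩
    have h6 : x = ∑ i, v.repr ⟨x, hx⟩ i • (v i : V) := by
      have := congrArg Z.subtype h5
      simp only [map_sum, map_smul] at this
      simpa using this.symm
    rw [h6]
    refine Submodule.sum_mem _ fun i _ => Submodule.smul_mem _ _ ?_
    have h7 : (v i : V) = (c i)⁻¹ • (c i • (v i : V)) := by
      rw [smul_smul, inv_mul_cancel₀ (hc0 i), one_smul]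
    rw [h7]
    exact Submodule.smul_mem _ _ (Submodule.subset_span ⟨i, rfl⟩)


open IsLocalRing in
structure Mid {K : Type*} [Field K] {A : Type*} [CommRing A] [IsLocalRing A]
    [Algebra K A] {n k : ℕ} (t : Fin n → A) (z : Fin k → A) (φ : A →ₗ[K] K) : Prop where
  nd : ∀ a, (∀ b, φ (a * b) = 0) → a = 0
  tm : ∀ i, t i ∈ maximalIdeal A
  zm : ∀ i, z i ∈ maximalIdeal A
  span : ∀ a : A, ∃ (c : K) (l : Fin n → K) (r : Fin k → K),
    a - (algebraMap K A c + ∑ i, l i • t i + ∑ i, r i • z i) ∈ maximalIdeal A ^ 2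
  tt : ∀ i j, φ (t i * t j) = 0
  tz : ∀ i j, φ (t i * z j) = 0
  zz : ∀ i j, φ (z i * z j) = if i = j then 2 else 0
  zw : ∀ i, ∀ w ∈ maximalIdeal A ^ 2, z i * w = 0
  ndc : ∀ l : Fin n → K, (∀ i j, φ ((∑ s, l s • t s) * (t i * t j)) = 0) → l = 0
  m4 : maximalIdeal A ^ 4 = ⊥

theorem fwd_aux {K : Type*} [Field K] [IsAlgClosed K] [CharZero K] {A : Type*} [CommRing A]
    [Algebra K A] [FiniteDimensional K A] {n k : ℕ} (M I2 I3 : Ideal A)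
    (hunit : ∀ x, x ∉ M → IsUnit x)
    (hnds : ∀ φ : A →ₗ[K] K, (∀ s : A, (∀ x ∈ M, s * x = 0) → φ s = 0 → s = 0) →
      ∀ a, (∀ b, φ (a * b) = 0) → a = 0)
    (eI2 : I2 = M * M)
    (e22 : ∀ x ∈ I2, ∀ y ∈ I2, x * y = 0)
    (l32 : I3 ≤ I2)
    (hres : ∀ a : A, ∃ c : K, a - algebraMap K A c ∈ M)
    (dA : Module.finrank K A = n + k + n + 2)
    (d1 : Module.finrank K (M.restrictScalars K) = n + k + n + 1)
    (d2 : Module.finrank K (I2.restrictScalars K) = n + 1)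
    (d3 : Module.finrank K (I3.restrictScalars K) = 1)
    (hsoc : ∀ s : A, (∀ x ∈ M, s * x = 0) → s ∈ I3) :
    ∃ (t : Fin n → A) (z : Fin k → A) (φ : A →ₗ[K] K), 
      ((∀ a, (∀ b, φ (a * b) = 0) → a = 0) ∧ (∀ i, t i ∈ M) ∧ (∀ i, z i ∈ M) ∧
      (∀ a : A, ∃ (c : K) (l : Fin n → K) (r : Fin k → K),
        a - (algebraMap K A c + ∑ i, l i • t i + ∑ i, r i • z i) ∈ I2) ∧
      (∀ i j, φ (t i * t j) = 0) ∧ (∀ i j, φ (t i * z j) = 0) ∧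
      (∀ i j, φ (z i * z j) = if i = j then 2 else 0) ∧ (∀ i, ∀ w ∈ I2, z i * w = 0) ∧
      (∀ l : Fin n → K, (∀ i j, φ ((∑ s, l s • t s) * (t i * t j)) = 0) → l = 0)) ∧
      φ 1 = 0 ∧ (∀ i, φ (t i) = 0) ∧ (∀ i, φ (z i) = 0) := by
  have e11 : ∀ x ∈ M, ∀ y ∈ M, x * y ∈ I2 := by
    intro x hx y hy
    rw [eI2]; exact Ideal.mul_mem_mul hx hy
  have l21 : I2 ≤ M := by rw [eI2]; exact Ideal.mul_le_left
  set N1 := M.restrictScalars K with hN1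
  set N2 := I2.restrictScalars K with hN2
  set N3 := I3.restrictScalars K with hN3
  -- the functional
  have hnontriv : ∃ s0 : N3, s0 ≠ 0 := by
    have : Nontrivial N3 := Module.nontrivial_of_finrank_pos (R := K) (by rw [d3]; norm_num)
    exact exists_ne 0
  obtain ⟨s0, hs0⟩ := hnontriv
  have hs0' : (s0 : A) ≠ 0 := fun h => hs0 (Subtype.ext h)
  have hgen : ∀ φ : A →ₗ[K] K, φ s0 ≠ 0 → ∀ a, (∀ b, φ (a * b) = 0) → a = 0 := by
    intro φ hφ
    apply hnds
    intro s hs hφs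
    obtain ⟨c, hc⟩ := (finrank_eq_one_iff_of_nonzero' s0 hs0).1 d3 ⟨s, hsoc s hs⟩
    have hc' : c • (s0 : A) = s := congrArg Subtype.val hc
    rw [← hc', map_smul, smul_eq_mul] at hφs
    rcases mul_eq_zero.1 hφs with h | h
    · rw [← hc', h, zero_smul]
    · exact absurd h hφ
  obtain ⟨φ, hφ⟩ : ∃ φ : A →ₗ[K] K, φ s0 ≠ 0 := by
    by_contra! h
    exact hs0' ((Module.forall_dual_apply_eq_zero_iff K (s0 : A)).1 h)
  have hnd := hgen φ hφ
  have hBnd := Bf_nondeg φ hnd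
  set W := (Bf φ).orthogonal N2 with hW
  have memW : ∀ x, x ∈ W ↔ ∀ q ∈ I2, x * q = 0 := by
    intro x
    rw [hW, LinearMap.BilinForm.mem_orthogonal_iff]
    constructor
    · intro h q hq
      apply hnd
      intro b
      have := h (q * b) (Ideal.mul_mem_right _ _ hq)
      rwa [Bf_apply, mul_comm, ← mul_assoc] at this
    · intro h q hq
      rw [Bf_apply, mul_comm, h q hq, map_zero]
  have hWW : (Bf φ).orthogonal W = N2 :=
    LinearMap.BilinForm.orthogonal_orthogonal hBnd (Bf_refl φ) N2
  have dW : Module.finrank K W = Module.finrank K N2 + k := by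
    rw [hW, LinearMap.BilinForm.finrank_orthogonal hBnd, dA, d2]; omega
  have hN2W : N2 ≤ W := fun x hx => (memW x).2 (e22 x hx)
  have hWM : W ≤ N1 := by
    intro x hx
    by_contra hxm
    have hu : IsUnit x := hunit x hxm
    have : N2 = ⊥ := by
      rw [eq_bot_iff]
      intro q hq
      exact (Submodule.mem_bot K).2 (hu.mul_right_eq_zero.1 ((memW x).1 hx q hq))
    rw [this, finrank_bot] at d2
    omega
  obtain ⟨z, hzW, hzz, hWz⟩ := exists_z (Bf φ) (Bf_symm φ) N2 W hN2W
    (fun w hw h => by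
      rw [← hWW, LinearMap.BilinForm.mem_orthogonal_iff]
      intro x hx
      exact Bf_refl φ _ _ (h x hx))
    (fun w hw x hx => by rw [Bf_apply, (memW w).1 hw x hx, map_zero]) k dW
  have hzM : ∀ i, z i ∈ M := fun i => hWM (hzW i)
  set Z := Submodule.span K (Set.range z) with hZ
  have hZW : Z ≤ W := by
    rw [hZ, Submodule.span_le]; rintro _ ⟨i, rfl⟩; exact hzW i
  have memZ : ∀ x, x ∈ (Bf φ).orthogonal Z ↔ ∀ i, φ (x * z i) = 0 := by
    intro x
    rw [LinearMap.BilinForm.mem_orthogonal_iff]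
    constructor
    · intro h i
      have := h (z i) (Submodule.subset_span ⟨i, rfl⟩)
      rwa [Bf_apply, mul_comm] at this
    · intro h y hy
      have : Z ≤ LinearMap.ker (Bf φ x) := by
        rw [hZ, Submodule.span_le]; rintro _ ⟨i, rfl⟩; exact h i
      have := this hy
      rw [LinearMap.mem_ker, Bf_apply, mul_comm] at this
      exact this
  set U := N1 ⊓ (Bf φ).orthogonal Z with hU
  have hN2U : N2 ≤ U := by
    intro x hx
    refine ⟨l21 hx, (memZ x).2 fun i => ?_⟩
    rw [mul_comm, (memW _).1 (hzW i) x hx, map_zero]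
  have sumz : ∀ r : Fin k → K, ∀ j, φ ((∑ i, r i • z i) * z j) = r j * 2 := by
    intro r j
    rw [Finset.sum_mul, map_sum, Finset.sum_eq_single j]
    · have := hzz j j
      rw [Bf_apply, if_pos rfl] at this
      rw [smul_mul_assoc, map_smul, this, smul_eq_mul]
    · intro i _ hij
      have := hzz i j
      rw [Bf_apply, if_neg hij] at this
      rw [smul_mul_assoc, map_smul, this, smul_zero]
    · simp
  have zmem : ∀ r : Fin k → K, ∑ i, r i • z i ∈ Z := fun r =>
    Submodule.sum_mem _ fun i _ => Submodule.smul_mem _ _ (Submodule.subset_span ⟨i, rfl⟩)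
  have memZs : ∀ x ∈ Z, ∃ r : Fin k → K, x = ∑ i, r i • z i := by
    intro x hx
    obtain ⟨r, hr⟩ := (Submodule.mem_span_range_iff_exists_fun K).1 hx
    exact ⟨r, hr.symm⟩
  have hZU : Z ⊔ U = N1 := by
    apply le_antisymm (sup_le (hZW.trans hWM) inf_le_left)
    intro x hx
    set y := ∑ i, (φ (x * z i) / 2) • z i with hy
    rw [Submodule.mem_sup]
    refine ⟨y, zmem _, x - y, ⟨N1.sub_mem hx (hWM (hZW (zmem _))), (memZ _).2 fun i => ?_⟩, by abel⟩
    rw [sub_mul, map_sub, hy, sumz, div_mul_cancel₀ _ two_ne_zero, sub_self]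
  have hZU0 : Z ⊓ U = ⊥ := by
    rw [eq_bot_iff]
    rintro x ⟨hx, -, hx'⟩
    obtain ⟨r, rfl⟩ := memZs x hx
    have : r = 0 := by
      funext j
      have h1 := (memZ _).1 hx' j
      rw [sumz] at h1
      simpa using h1
    rw [this]; simp
  have hzli : LinearIndependent K z := by
    rw [Fintype.linearIndependent_iff]
    intro r hr j
    have h1 := sumz r j
    rw [hr, zero_mul, map_zero] at h1
    simpa using h1.symm
  have dZ : Module.finrank K Z = k := by
    rw [hZ, finrank_span_eq_card hzli, Fintype.card_fin]
  have dU : Module.finrank K U = n + 1 + n := by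
    have := Submodule.finrank_sup_add_finrank_inf_eq Z U
    rw [hZU, hZU0, finrank_bot, d1, dZ] at this
    omega
  obtain ⟨TT, hTU, hTsup, hTinf⟩ := relcompl N2 U hN2U
  have dT : Module.finrank K TT = n := by
    have := Submodule.finrank_sup_add_finrank_inf_eq N2 TT
    rw [hTsup, hTinf, finrank_bot, d2, dU] at this
    omega
  let bT : Module.Basis (Fin n) K TT := Module.finBasisOfFinrankEq K TT dT
  let T : Fin n → A := fun i => (bT i : A)
  have hTm : ∀ i, T i ∈ TT := fun i => (bT i).2
  have hTspan : ∀ x ∈ TT, ∃ l : Fin n → K, x = ∑ i, l i • T i := by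
    intro x hx
    refine ⟨fun i => bT.repr ⟨x, hx⟩ i, ?_⟩
    have := congrArg TT.subtype (bT.sum_repr ⟨x, hx⟩)
    simp only [map_sum, map_smul] at this
    simpa using this.symm
  have hTli : LinearIndependent K T := bT.linearIndependent.map' TT.subtype (Submodule.ker_subtype _)
  have N1dec : ∀ x ∈ M, ∃ (l : Fin n → K) (r : Fin k → K),
      x - (∑ i, l i • T i + ∑ i, r i • z i) ∈ I2 := by
    intro x hx
    have hx' : x ∈ Z ⊔ U := by rw [hZU]; exact hx
    obtain ⟨y, hy, u, hu, rfl⟩ := Submodule.mem_sup.1 hx'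
    rw [← hTsup] at hu
    obtain ⟨q, hq, w, hw, rfl⟩ := Submodule.mem_sup.1 hu
    obtain ⟨r, rfl⟩ := memZs y hy
    obtain ⟨l, rfl⟩ := hTspan w hw
    refine ⟨l, r, ?_⟩
    have : ∑ i, r i • z i + (q + ∑ i, l i • T i) - (∑ i, l i • T i + ∑ i, r i • z i) = q := by abel
    rw [this]; exact hq
  -- correction
  let ψ : N2 →ₗ[K] (Fin n → K) := LinearMap.pi fun i => (Bf φ (T i)).comp N2.subtype
  have hψ : ∀ q i, ψ q i = φ (T i * q) := fun q i => rfl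
  have kerψ : LinearMap.ker ψ ≤ N3.comap N2.subtype := by
    rintro ⟨q, hq⟩ hq0
    rw [LinearMap.mem_ker] at hq0
    apply hsoc
    have hq1 : ∀ x ∈ M, φ (q * x) = 0 := by
      intro x hx
      obtain ⟨l, r, hlr⟩ := N1dec x hx
      have h1 := e22 q hq _ hlr
      rw [mul_sub, sub_eq_zero] at h1
      rw [h1, mul_add, map_add, Finset.mul_sum, Finset.mul_sum, map_sum, map_sum]
      have h2 : ∀ i, q * (l i • T i) = l i • (T i * q) := fun i => by
        rw [mul_smul_comm, mul_comm]
      have h3 : ∀ i, q * (r i • z i) = 0 := fun i => by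
        rw [mul_smul_comm, mul_comm, (memW _).1 (hzW i) q hq, smul_zero]
      have h4 : ∀ i, φ (T i * q) = 0 := fun i => congrFun hq0 i
      simp [h2, h3, h4]
    intro x hx
    apply hnd
    intro b
    rw [Submodule.subtype_apply, mul_assoc]
    exact hq1 _ (Ideal.mul_mem_right _ _ hx)
  have surjψ : Function.Surjective ψ := by
    rw [← LinearMap.range_eq_top]
    apply Submodule.eq_top_of_finrank_eq
    have h1 := LinearMap.finrank_range_add_finrank_ker ψ
    have h2 : Module.finrank K (LinearMap.ker ψ) ≤ 1 := by
      refine (Submodule.finrank_mono kerψ).trans ?_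
      rw [← d3]
      refine LinearMap.finrank_le_finrank_of_injective
        (f := (N2.subtype.restrict (p := N3.comap N2.subtype) (q := N3) fun x hx => hx)) ?_
      intro a b hab
      exact Subtype.ext (Subtype.ext (congrArg (fun y : N3 => (y : A)) hab))
    have h3 := Submodule.finrank_le (LinearMap.range ψ)
    rw [d2] at h1
    rw [Module.finrank_fin_fun] at h3 ⊢
    omega
  have hq : ∀ j, ∃ q : N2, ∀ i, φ (T i * q) = - (φ (T i * T j) / 2) := by
    intro j
    obtain ⟨q, hq⟩ := surjψ fun i => - (φ (T i * T j) / 2)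
    exact ⟨q, fun i => congrFun hq i⟩
  choose q hq using hq
  let t : Fin n → A := fun i => T i + q i
  have hTM : ∀ i, T i ∈ M := fun i => (hTU (hTm i)).1
  have hqM2 : ∀ i, (q i : A) ∈ I2 := fun i => (q i).2
  have htM : ∀ i, t i ∈ M := fun i => M.add_mem (hTM i) (l21 (hqM2 i))
  have htt : ∀ i j, φ (t i * t j) = 0 := by
    intro i j
    have : t i * t j = T i * T j + T i * q j + T j * q i + q i * q j := by
      simp only [t]; ring
    rw [this, e22 _ (hqM2 i) _ (hqM2 j), add_zero, map_add, map_add, hq, hq, mul_comm (T j) (T i)]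
    ring
  have htz : ∀ i j, φ (t i * z j) = 0 := by
    intro i j
    have h1 := (memZ _).1 (hTU (hTm i)).2 j
    simp only [t]
    rw [add_mul, map_add, h1, mul_comm _ (z j), (memW _).1 (hzW j) _ (hqM2 i), map_zero, add_zero]
  have hsumt : ∀ l : Fin n → K, ∑ i, l i • t i - ∑ i, l i • T i ∈ I2 := by
    intro l
    rw [← Finset.sum_sub_distrib]
    refine Submodule.sum_mem _ fun i _ => ?_
    rw [← smul_sub]
    have : t i - T i = q i := by simp [t]
    rw [this]
    exact N2.smul_mem _ (hqM2 i)
  have hspan : ∀ a : A, ∃ (c : K) (l : Fin n → K) (r : Fin k → K),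
      a - (algebraMap K A c + ∑ i, l i • t i + ∑ i, r i • z i) ∈ I2 := by
    intro a
    obtain ⟨c, hc⟩ := hres a
    obtain ⟨l, r, hlr⟩ := N1dec _ hc
    refine ⟨c, l, r, ?_⟩
    have := (I2).sub_mem hlr (hsumt l)
    convert this using 1
    abel
  have hndc : ∀ l : Fin n → K, (∀ i j, φ ((∑ s, l s • t s) * (t i * t j)) = 0) → l = 0 := by
    intro l hl
    set s := ∑ i, l i • t i with hs
    have hsM : s ∈ M := N1.sum_mem fun i _ => N1.smul_mem _ (htM i)
    have step : ∀ x ∈ M, ∀ y ∈ M, (∀ i, φ (s * (t i * y)) = 0) → φ (s * (x * y)) = 0 := by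
      intro x hx y hy h
      obtain ⟨c, hc⟩ := N1dec x hx
      obtain ⟨r, hr⟩ := hc
      have h0 := I2.sub_mem hr (hsumt c)
      have h1 : (s * y) * (x - (∑ i, c i • t i + ∑ i, r i • z i)) = 0 := by
        apply e22 _ (e11 _ hsM _ hy)
        convert h0 using 1
        abel
      rw [mul_sub, sub_eq_zero] at h1
      have h2 : s * (x * y) = s * y * x := by ring
      have h3 : ∀ i, s * y * (r i • z i) = 0 := fun i => by
        rw [mul_smul_comm, mul_comm, (memW _).1 (hzW i) _ (e11 _ hsM _ hy), smul_zero]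
      have h5 : ∀ i, s * y * (c i • t i) = c i • (s * (t i * y)) := fun i => by
        rw [mul_smul_comm]; congr 1; ring
      rw [h2, h1, mul_add, Finset.mul_sum, Finset.mul_sum]
      simp only [h3, h5, map_add, map_sum, map_smul, h]
      simp
    have hprod : ∀ x ∈ M, ∀ y ∈ M, φ (s * (x * y)) = 0 := by
      intro x hx y hy
      apply step x hx y hy
      intro i
      rw [mul_comm (t i) y]
      apply step y hy _ (htM i)
      intro j
      exact hl j i
    have hsW : s ∈ W := by
      rw [hW, LinearMap.BilinForm.mem_orthogonal_iff]
      intro w hw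
      have hw' : w ∈ M * M := by rw [← eI2]; exact hw
      rw [Bf_apply, mul_comm]
      induction hw' using Submodule.mul_induction_on' with
      | mem_mul_mem x hx y hy => exact hprod x hx y hy
      | add x hx y hy h1 h2 =>
        rw [mul_add, map_add, h1 (by rw [← eI2] at hx; exact hx),
          h2 (by rw [← eI2] at hy; exact hy), add_zero]
    have hsN2 : s ∈ N2 := by
      rw [← hWW, LinearMap.BilinForm.mem_orthogonal_iff]
      intro w hw
      obtain ⟨y, hy, x, hx, rfl⟩ := Submodule.mem_sup.1 (hWz hw)
      have h1 : φ (s * x) = 0 := by rw [(memW _).1 hsW x hx, map_zero]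
      have h2 : φ (s * y) = 0 := by
        have : s ∈ (Bf φ).orthogonal Z := by
          rw [memZ]
          intro j
          rw [hs, Finset.sum_mul, map_sum]
          simp [htz]
        have := (LinearMap.BilinForm.mem_orthogonal_iff.1 this) y hy
        rwa [Bf_apply, mul_comm] at this
      rw [Bf_apply, mul_comm, mul_add, map_add, h1, h2, add_zero]
    have h3 : ∑ i, l i • T i ∈ N2 ⊓ TT := by
      constructor
      · have := N2.sub_mem hsN2 (hsumt l)
        rwa [sub_sub_cancel] at this
      · exact TT.sum_mem fun i _ => TT.smul_mem _ (hTm i)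
    rw [hTinf, Submodule.mem_bot] at h3
    funext i
    exact (Fintype.linearIndependent_iff.1 hTli) l h3 i
  -- final functional
  let g : Unit ⊕ (Fin n ⊕ Fin k) → A := Sum.elim (fun _ => 1) (Sum.elim t z)
  let C := Submodule.span K (Set.range g)
  have hg : ∀ s, g s ∈ C := fun s => Submodule.subset_span ⟨s, rfl⟩
  have hC1 : N2 ⊔ C = ⊤ := by
    rw [eq_top_iff]
    intro a _
    obtain ⟨c, l, r, h⟩ := hspan a
    rw [Submodule.mem_sup]
    refine ⟨_, h, _, ?_, sub_add_cancel _ _⟩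
    refine C.add_mem (C.add_mem ?_ ?_) ?_
    · rw [Algebra.algebraMap_eq_smul_one]
      exact C.smul_mem _ (hg (Sum.inl ()))
    · exact Submodule.sum_mem _ fun i _ => C.smul_mem _ (hg (Sum.inr (Sum.inl i)))
    · exact Submodule.sum_mem _ fun i _ => C.smul_mem _ (hg (Sum.inr (Sum.inr i)))
  have hC2 : N2 ⊓ C = ⊥ := by
    have h1 := Submodule.finrank_sup_add_finrank_inf_eq N2 C
    have h2 : Module.finrank K C ≤ 1 + (n + k) := by
      have := finrank_range_le_card (R := K) g
      simp only [Fintype.card_sum, Fintype.card_unit, Fintype.card_fin] at this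
      exact this
    rw [hC1, finrank_top, dA, d2] at h1
    exact Submodule.finrank_eq_zero.1 (by omega)
  have hcompl : IsCompl N2 C := IsCompl.of_eq hC2 hC1
  let φ' : A →ₗ[K] K := LinearMap.ofIsCompl hcompl (φ.comp N2.subtype) 0
  have hφ'2 : ∀ x ∈ I2, φ' x = φ x := fun x hx =>
    LinearMap.ofIsCompl_apply_left hcompl (⟨x, hx⟩ : N2)
  have hφ'C : ∀ s, φ' (g s) = 0 := fun s =>
    LinearMap.ofIsCompl_apply_right hcompl (⟨g s, hg s⟩ : C)
  refine ⟨t, z, φ', ⟨?_, htM, hzM, hspan, ?_, ?_, ?_, ?_, ?_⟩, hφ'C (Sum.inl ()),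
    fun i => hφ'C (Sum.inr (Sum.inl i)), fun i => hφ'C (Sum.inr (Sum.inr i))⟩
  · apply hgen
    rw [hφ'2 _ (l32 s0.2)]
    exact hφ
  · intro i j
    rw [hφ'2 _ (e11 _ (htM i) _ (htM j)), htt]
  · intro i j
    rw [hφ'2 _ (e11 _ (htM i) _ (hzM j)), htz]
  · intro i j
    rw [hφ'2 _ (e11 _ (hzM i) _ (hzM j))]
    exact hzz i j
  · intro i
    exact (memW _).1 (hzW i)
  · intro l hl
    apply hndc l
    intro i j
    rw [← hφ'2 _ (Ideal.mul_mem_left _ _ (e11 _ (htM i) _ (htM j))), hl]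

open IsLocalRing in
theorem fwd {K : Type*} [Field K] [IsAlgClosed K] [CharZero K] {A : Type*} [CommRing A]
    [IsLocalRing A] [Algebra K A] [FiniteDimensional K A] {n k : ℕ}
    (h4 : maximalIdeal A ^ 4 = ⊥)
    (hres : ∀ a : A, ∃ c : K, a - algebraMap K A c ∈ maximalIdeal A)
    (dA : Module.finrank K A = n + k + n + 2)
    (d1 : Module.finrank K ((maximalIdeal A).restrictScalars K) = n + k + n + 1)
    (d2 : Module.finrank K ((maximalIdeal A ^ 2).restrictScalars K) = n + 1)
    (d3 : Module.finrank K ((maximalIdeal A ^ 3).restrictScalars K) = 1)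
    (hsoc : ∀ s : A, (∀ x ∈ maximalIdeal A, s * x = 0) → s ∈ maximalIdeal A ^ 3) :
    ∃ (t : Fin n → A) (z : Fin k → A) (φ : A →ₗ[K] K), Mid t z φ ∧
      φ 1 = 0 ∧ (∀ i, φ (t i) = 0) ∧ (∀ i, φ (z i) = 0) := by
  obtain ⟨t, z, φ, ⟨a1, a2, a3, a4, a5, a6, a7, a8, a9⟩, h⟩ :=
    fwd_aux (K := K) (maximalIdeal A) (maximalIdeal A ^ 2) (maximalIdeal A ^ 3)
    (fun x hx => by by_contra h; exact hx ((mem_maximalIdeal x).2 h))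
    (fun φ => nondeg_of_socle h4 φ) (pow_two _)
    (fun x hx y hy => by
      have : x * y ∈ maximalIdeal A ^ (2 + 2) := by
        rw [pow_add]; exact Ideal.mul_mem_mul hx hy
      rw [h4] at this
      exact (Submodule.mem_bot A).1 this)
    (Ideal.pow_le_pow_right (by norm_num)) hres dA d1 d2 d3 hsoc
  exact ⟨t, z, φ, ⟨a1, a2, a3, a4, a5, a6, a7, a8, a9, h4⟩, h⟩


theorem surj_aux {K : Type*} [Field K] {A : Type*} [CommRing A] [Algebra K A]
    (M I2 I3 : Ideal A) (eI2 : I2 = M * M) (eI3 : I3 = I2 * M)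
    (e22 : ∀ x ∈ I2, ∀ y ∈ I2, x * y = 0) (e31 : ∀ x ∈ I3, ∀ y ∈ M, x * y = 0)
    (S : Subalgebra K A) (hS : ∀ a, ∃ s ∈ S, a - s ∈ I2) (a : A) : a ∈ S := by
  have l21 : I2 ≤ M := by rw [eI2]; exact Ideal.mul_le_left
  have l32 : I3 ≤ I2 := by rw [eI3]; exact Ideal.mul_le.2 fun a ha b _ => I2.mul_mem_right b ha
  have e21 : ∀ x ∈ I2, ∀ y ∈ M, x * y ∈ I3 := by
    intro x hx y hy; rw [eI3]; exact Ideal.mul_mem_mul hx hy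
  have H2 : ∀ w ∈ M * M, ∃ s ∈ S, w - s ∈ I3 := by
    intro w hw
    induction hw using Submodule.mul_induction_on' with
    | mem_mul_mem x hx y hy =>
      obtain ⟨s, hs, hxs⟩ := hS x
      obtain ⟨s', hs', hys⟩ := hS y
      refine ⟨s * s', S.mul_mem hs hs', ?_⟩
      have h1 : s' ∈ M := by
        have := M.sub_mem hy (l21 hys)
        rwa [sub_sub_cancel] at this
      have h2 : x * y - s * s' = (y - s') * x + (x - s) * s' := by ring
      rw [h2]
      exact I3.add_mem (e21 _ hys _ hx) (e21 _ hxs _ h1)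
    | add x hx y hy h1 h2 =>
      obtain ⟨s, hs, hxs⟩ := h1
      obtain ⟨s', hs', hys⟩ := h2
      refine ⟨s + s', S.add_mem hs hs', ?_⟩
      have := I3.add_mem hxs hys
      convert this using 1
      ring
  rw [← eI2] at H2
  have H3 : ∀ w ∈ I2 * M, w ∈ S := by
    intro w hw
    induction hw using Submodule.mul_induction_on' with
    | mem_mul_mem x hx y hy =>
      obtain ⟨s, hs, hxs⟩ := H2 x hx
      obtain ⟨s', hs', hys⟩ := hS y
      have h1 : s' ∈ M := by
        have := M.sub_mem hy (l21 hys)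
        rwa [sub_sub_cancel] at this
      have h2 : x * y = s * s' + (x * (y - s') + (x - s) * s') := by ring
      rw [h2, e22 _ hx _ hys, e31 _ hxs _ h1, add_zero, add_zero]
      exact S.mul_mem hs hs'
    | add x hx y hy h1 h2 => exact S.add_mem h1 h2
  rw [← eI3] at H3
  obtain ⟨s, hs, h1⟩ := hS a
  obtain ⟨s', hs', h2⟩ := H2 _ h1
  have h3 := S.add_mem (S.add_mem (H3 _ h2) hs') hs
  convert h3 using 1
  ring

theorem rev_aux {K : Type*} [Field K] [CharZero K] {A : Type*} [CommRing A]
    [Algebra K A] [FiniteDimensional K A] {n k : ℕ} (hn : 1 ≤ n) (M I2 I3 : Ideal A)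
    (hM : (1 : A) ∉ M)
    (eI2 : I2 = M * M) (eI3 : I3 = I2 * M)
    (e22 : ∀ x ∈ I2, ∀ y ∈ I2, x * y = 0) (e31 : ∀ x ∈ I3, ∀ y ∈ M, x * y = 0)
    (t : Fin n → A) (z : Fin k → A) (φ : A →ₗ[K] K)
    (hnd : ∀ a, (∀ b, φ (a * b) = 0) → a = 0) (htM : ∀ i, t i ∈ M) (hzM : ∀ i, z i ∈ M)
    (hspan : ∀ a : A, ∃ (c : K) (l : Fin n → K) (r : Fin k → K),
        a - (algebraMap K A c + ∑ i, l i • t i + ∑ i, r i • z i) ∈ I2)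
    (htz : ∀ i j, φ (t i * z j) = 0)
    (hzz : ∀ i j, φ (z i * z j) = if i = j then 2 else 0) (hzw : ∀ i, ∀ w ∈ I2, z i * w = 0)
    (hndc : ∀ l : Fin n → K, (∀ i j, φ ((∑ s, l s • t s) * (t i * t j)) = 0) → l = 0)
    (hq1 : Module.finrank K (A ⧸ M.restrictScalars K) = 1) :
    Module.finrank K A = n + k + n + 2 ∧
    Module.finrank K (M.restrictScalars K) = n + k + n + 1 ∧
    Module.finrank K (I2.restrictScalars K) = n + 1 ∧
    Module.finrank K (I3.restrictScalars K) = 1 ∧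
    Module.finrank K ((Submodule.colon (⊥ : Ideal A) M).restrictScalars K) = 1 := by
  have l21 : I2 ≤ M := by rw [eI2]; exact Ideal.mul_le_left
  have l32 : I3 ≤ I2 := by rw [eI3]; exact Ideal.mul_le.2 fun a ha b _ => I2.mul_mem_right b ha
  have e21 : ∀ x ∈ I2, ∀ y ∈ M, x * y ∈ I3 := by
    intro x hx y hy; rw [eI3]; exact Ideal.mul_mem_mul hx hy
  have e11 : ∀ x ∈ M, ∀ y ∈ M, x * y ∈ I2 := by
    intro x hx y hy; rw [eI2]; exact Ideal.mul_mem_mul hx hy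
  set N1 := M.restrictScalars K with hN1
  set N2 := I2.restrictScalars K with hN2
  set N3 := I3.restrictScalars K with hN3
  set So := (Submodule.colon (⊥ : Ideal A) M).restrictScalars K with hSo
  have memSo : ∀ x, x ∈ So ↔ ∀ y ∈ M, x * y = 0 := by
    intro x
    rw [hSo, Submodule.restrictScalars_mem, Submodule.mem_colon]
    simp
  have hBnd := Bf_nondeg φ hnd
  have memSo' : ∀ x, (∀ y ∈ M, φ (x * y) = 0) → x ∈ So := by
    intro x h
    rw [memSo]
    intro y hy
    apply hnd
    intro b
    rw [mul_assoc]
    exact h _ (M.mul_mem_right _ hy)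
  have hSoO : So = (Bf φ).orthogonal N1 := by
    ext x
    rw [LinearMap.BilinForm.mem_orthogonal_iff]
    constructor
    · intro h y hy
      rw [Bf_apply, mul_comm, (memSo x).1 h y hy, map_zero]
    · intro h
      apply memSo'
      intro y hy
      have := h y hy
      rwa [Bf_apply, mul_comm] at this
  have q1 := Submodule.finrank_quotient_add_finrank N1
  rw [hq1] at q1
  have dSo : Module.finrank K So = 1 := by
    rw [hSoO, LinearMap.BilinForm.finrank_orthogonal hBnd]; omega
  have h3So : N3 ≤ So := fun x hx => (memSo x).2 fun y hy => e31 x hx y hy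
  have N3ne : N3 ≠ ⊥ := by
    intro h0
    have : (fun _ => 1 : Fin n → K) = 0 := by
      apply hndc
      intro i j
      have : (∑ s, (1 : K) • t s) * (t i * t j) ∈ N3 := by
        rw [mul_comm]
        exact e21 _ (e11 _ (htM i) _ (htM j)) _ (N1.sum_mem fun i _ => N1.smul_mem _ (htM i))
      rw [h0, Submodule.mem_bot] at this
      rw [this, map_zero]
    exact one_ne_zero (congrFun this ⟨0, hn⟩)
  have d3 : Module.finrank K N3 = 1 := by
    have h1 := Submodule.finrank_mono h3So
    have h2 : Module.finrank K N3 ≠ 0 := fun h => N3ne (Submodule.finrank_eq_zero.1 h)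
    omega
  have h3eq : N3 = So := Submodule.eq_of_le_of_finrank_eq h3So (by rw [d3, dSo])
  let ψ : N2 →ₗ[K] (Fin n → K) := LinearMap.pi fun i => (Bf φ (t i)).comp N2.subtype
  have hψ : ∀ q i, ψ q i = φ (t i * q) := fun q i => rfl
  have kerψ : LinearMap.ker ψ = N3.comap N2.subtype := by
    ext ⟨q, hq⟩
    rw [LinearMap.mem_ker, Submodule.mem_comap]
    constructor
    · intro hq0
      rw [h3eq]
      apply memSo'
      intro x hx
      obtain ⟨c, l, r, hlr⟩ := hspan x
      have hc0 : algebraMap K A c ∈ M := by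
        have h1 := M.sub_mem hx (l21 hlr)
        rw [sub_sub_cancel] at h1
        have h2 : ∑ i, l i • t i ∈ N1 := N1.sum_mem fun i _ => N1.smul_mem _ (htM i)
        have h3 : ∑ i, r i • z i ∈ N1 := N1.sum_mem fun i _ => N1.smul_mem _ (hzM i)
        have := M.sub_mem (M.sub_mem h1 h3) h2
        convert this using 1
        ring
      have hc : c = 0 := by
        by_contra hc
        apply hM
        have := N1.smul_mem c⁻¹ (show algebraMap K A c ∈ N1 from hc0)
        rwa [Algebra.algebraMap_eq_smul_one, smul_smul, inv_mul_cancel₀ hc, one_smul] at this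
      have h1 := e22 q hq _ hlr
      rw [mul_sub, sub_eq_zero] at h1
      rw [Submodule.subtype_apply, h1, hc, map_zero, zero_add, mul_add, map_add, Finset.mul_sum,
        Finset.mul_sum, map_sum, map_sum]
      have h2 : ∀ i, q * (l i • t i) = l i • (t i * q) := fun i => by
        rw [mul_smul_comm, mul_comm]
      have h3 : ∀ i, q * (r i • z i) = 0 := fun i => by
        rw [mul_smul_comm, mul_comm, hzw i q hq, smul_zero]
      have h4 : ∀ i, φ (t i * q) = 0 := fun i => congrFun hq0 i
      simp [h2, h3, h4]
    · intro h
      funext i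
      rw [hψ]
      have := e31 _ h _ (htM i)
      rw [Submodule.subtype_apply] at this
      rw [mul_comm, this, map_zero]; rfl
  have surjψ : Function.Surjective ψ := by
    rw [← LinearMap.range_eq_top]
    by_contra hne
    obtain ⟨f, hf0, hf⟩ := Submodule.exists_le_ker_of_lt_top _ (lt_top_iff_ne_top.2 hne)
    apply hf0
    have hfl : ∀ v, f v = ∑ i, f (Pi.single i 1) * v i := by
      intro v
      conv_lhs => rw [pi_eq_sum_univ' v]
      rw [map_sum]
      refine Finset.sum_congr rfl fun i _ => ?_
      rw [map_smul, smul_eq_mul, mul_comm]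
    have hl : (fun i => f (Pi.single i 1)) = 0 := by
      apply hndc
      intro i j
      have hij : t i * t j ∈ N2 := e11 _ (htM i) _ (htM j)
      have h1 : f (ψ ⟨_, hij⟩) = 0 := hf (LinearMap.mem_range_self ψ _)
      rw [hfl] at h1
      rw [Finset.sum_mul, map_sum, ← h1]
      refine Finset.sum_congr rfl fun s _ => ?_
      rw [smul_mul_assoc, map_smul, smul_eq_mul, hψ]
    ext v
    simp [congrFun hl v]
  have d2 : Module.finrank K N2 = n + 1 := by
    have h1 := LinearMap.finrank_range_add_finrank_ker ψ
    rw [LinearMap.range_eq_top.2 surjψ, finrank_top, Module.finrank_fin_fun, kerψ,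
      (Submodule.comapSubtypeEquivOfLe (show N3 ≤ N2 from l32)).finrank_eq, d3] at h1
    exact h1.symm
  let g : Unit ⊕ (Fin n ⊕ Fin k) → A := Sum.elim (fun _ => 1) (Sum.elim t z)
  let Θ := N2.mkQ.comp (Fintype.linearCombination K g)
  have hΘ : ∀ f, Fintype.linearCombination K g f = algebraMap K A (f (Sum.inl ())) +
      ∑ i, f (Sum.inr (Sum.inl i)) • t i + ∑ i, f (Sum.inr (Sum.inr i)) • z i := by
    intro f
    rw [Fintype.linearCombination_apply]
    simp [Fintype.sum_sum_type, g, Algebra.algebraMap_eq_smul_one, add_assoc]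
  have hbij : Function.Bijective Θ := by
    constructor
    · rw [← LinearMap.ker_eq_bot, LinearMap.ker_eq_bot']
      intro f hf
      have hf2 : Fintype.linearCombination K g f ∈ N2 := by
        simpa [Θ] using hf
      rw [hΘ] at hf2
      have g2 : ∑ i, f (Sum.inr (Sum.inl i)) • t i ∈ N1 :=
        N1.sum_mem fun i _ => N1.smul_mem _ (htM i)
      have g3 : ∑ i, f (Sum.inr (Sum.inr i)) • z i ∈ N1 :=
        N1.sum_mem fun i _ => N1.smul_mem _ (hzM i)
      have hc : f (Sum.inl ()) = 0 := by
        by_contra hc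
        apply hM
        have h1 : algebraMap K A (f (Sum.inl ())) ∈ N1 := by
          have := N1.sub_mem (N1.sub_mem (l21 hf2) g3) g2
          convert this using 1
          ring
        have := N1.smul_mem (f (Sum.inl ()))⁻¹ h1
        rwa [Algebra.algebraMap_eq_smul_one, smul_smul, inv_mul_cancel₀ hc, one_smul] at this
      rw [hc, map_zero, zero_add] at hf2
      have hr : ∀ j, f (Sum.inr (Sum.inr j)) = 0 := by
        intro j
        have h1 := congrArg φ (hzw j _ hf2)
        rw [mul_add, Finset.mul_sum, Finset.mul_sum, map_add, map_sum, map_sum] at h1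
        simp only [mul_smul_comm, map_smul, hzz, mul_comm (z j) (t _), htz] at h1
        simpa using h1
      simp only [hr, zero_smul, Finset.sum_const_zero, add_zero] at hf2
      have hl : (fun i => f (Sum.inr (Sum.inl i))) = 0 := by
        apply hndc
        intro i j
        rw [e22 _ hf2 _ (e11 _ (htM i) _ (htM j)), map_zero]
      funext s
      rcases s with ⟨⟩ | s | s
      · exact hc
      · exact congrFun hl s
      · exact hr s
    · intro x
      obtain ⟨a, rfl⟩ := N2.mkQ_surjective x
      obtain ⟨c, l, r, h⟩ := hspan a
      refine ⟨Sum.elim (fun _ => c) (Sum.elim l r), ?_⟩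
      simp only [Θ, LinearMap.comp_apply, hΘ]
      symm
      exact (Submodule.Quotient.eq N2).2 h
  have q2 := Submodule.finrank_quotient_add_finrank N2
  rw [← (LinearEquiv.ofBijective Θ hbij).finrank_eq, Module.finrank_fintype_fun_eq_card, d2] at q2
  simp only [Fintype.card_sum, Fintype.card_unit, Fintype.card_fin] at q2
  refine ⟨by omega, by omega, d2, d3, dSo⟩


noncomputable def quadF (K : Type*) [Field K] (n m : ℕ) : MvPolynomial (Fin m) K :=
  ∑ j ∈ Finset.univ.filter (fun j : Fin m => n ≤ (j : ℕ)), MvPolynomial.X j ^ 2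

theorem coeff_quadF {K : Type*} [Field K] (n m : ℕ) (γ : Fin m →₀ ℕ) :
    MvPolynomial.coeff γ (quadF K n m) =
      ∑ j ∈ Finset.univ.filter (fun j : Fin m => n ≤ (j : ℕ)),
        if Finsupp.single j 2 = γ then 1 else 0 := by
  classical
  rw [quadF, MvPolynomial.coeff_sum]
  exact Finset.sum_congr rfl fun j _ => by rw [MvPolynomial.coeff_X_pow]

theorem coeffF_left {K : Type*} [Field K] {n k : ℕ} (F3 : MvPolynomial (Fin n) K)
    (β : Fin n →₀ ℕ) :
    MvPolynomial.coeff (Finsupp.mapDomain (Fin.castAdd k) β)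
      (MvPolynomial.rename (Fin.castAdd k) F3 + quadF K n (n + k)) = MvPolynomial.coeff β F3 := by
  rw [MvPolynomial.coeff_add, MvPolynomial.coeff_rename_mapDomain _ (Fin.castAdd_injective n k),
    coeff_quadF, Finset.sum_eq_zero, add_zero]
  intro j hj
  rw [if_neg]
  intro h
  have h1 := DFunLike.congr_fun h j
  rw [Finsupp.mapDomain_of_notMem_range] at h1
  · simp at h1
  · rintro ⟨i, rfl⟩
    have := (Finset.mem_filter.1 hj).2
    simp at this
    omega

theorem coeffF_right {K : Type*} [Field K] {n k : ℕ} (F3 : MvPolynomial (Fin n) K)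
    (γ : Fin (n + k) →₀ ℕ) (i : Fin k) (hi : γ (Fin.natAdd n i) ≠ 0) :
    MvPolynomial.coeff γ
      (MvPolynomial.rename (Fin.castAdd k) F3 + quadF K n (n + k)) =
      if γ = Finsupp.single (Fin.natAdd n i) 2 then 1 else 0 := by
  rw [MvPolynomial.coeff_add, MvPolynomial.coeff_rename_eq_zero, zero_add,
    coeff_quadF, Finset.sum_eq_single (Fin.natAdd n i)]
  · simp only [eq_comm]
  · intro j _ hj
    rw [if_neg]
    rintro rfl
    rw [Finsupp.single_apply, if_neg hj] at hi
    exact hi rfl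
  · intro h; simp at h
  · rintro u rfl
    exfalso
    apply hi
    apply Finsupp.mapDomain_of_notMem_range
    rintro ⟨a, ha⟩
    have := congrArg Fin.val ha
    simp at this
    omega

theorem gamma_cases {n k : ℕ} (γ : Fin (n + k) →₀ ℕ) :
    (∃ β : Fin n →₀ ℕ, γ = Finsupp.mapDomain (Fin.castAdd k) β) ∨
      ∃ i : Fin k, γ (Fin.natAdd n i) ≠ 0 := by
  by_cases h : ∃ i : Fin k, γ (Fin.natAdd n i) ≠ 0
  · exact Or.inr h
  · push Not at h
    refine Or.inl ⟨Finsupp.equivFunOnFinite.symm fun i => γ (Fin.castAdd k i), ?_⟩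
    ext s
    refine Fin.addCases (fun i => ?_) (fun i => ?_) s
    · rw [Finsupp.mapDomain_apply (Fin.castAdd_injective n k)]; rfl
    · rw [h, Finsupp.mapDomain_of_notMem_range]
      rintro ⟨a, ha⟩
      have := congrArg Fin.val ha
      simp at this
      omega

theorem exists_dec {m : ℕ} (γ : Fin m →₀ ℕ) (i : Fin m) (h : γ i ≠ 0) :
    ∃ γ', γ = Finsupp.single i 1 + γ' :=
  ⟨γ - Finsupp.single i 1, (add_tsub_cancel_of_le (by
    rw [Finsupp.single_le_iff]; omega)).symm⟩

theorem exists_dec' {m : ℕ} (γ : Fin m →₀ ℕ) (d : ℕ) (h : γ.degree = d + 1) :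
    ∃ i γ', γ = Finsupp.single i 1 + γ' ∧ γ'.degree = d := by
  have : γ ≠ 0 := by rintro rfl; simp at h
  obtain ⟨i, hi⟩ := Finsupp.ne_iff.1 this
  obtain ⟨γ', rfl⟩ := exists_dec γ i hi
  refine ⟨i, γ', rfl, ?_⟩
  rw [map_add, Finsupp.degree_single] at h
  omega

theorem degree_one {m : ℕ} (γ : Fin m →₀ ℕ) (h : γ.degree = 1) :
    ∃ i, γ = Finsupp.single i 1 := by
  obtain ⟨i, γ', rfl, h'⟩ := exists_dec' γ 0 h
  rw [Finsupp.degree_eq_zero_iff] at h'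
  exact ⟨i, by rw [h', add_zero]⟩

theorem degree_two {m : ℕ} (γ : Fin m →₀ ℕ) (h : γ.degree = 2) :
    ∃ i j, γ = Finsupp.single i 1 + Finsupp.single j 1 := by
  obtain ⟨i, γ', rfl, h'⟩ := exists_dec' γ 1 h
  obtain ⟨j, rfl⟩ := degree_one γ' h'
  exact ⟨i, j, rfl⟩

/-- monomials in `t` -/
def mon {A : Type*} [CommRing A] {m : ℕ} (t : Fin m → A) (γ : Fin m →₀ ℕ) : A := ∏ i, t i ^ γ i

theorem mon_add {A : Type*} [CommRing A] {m : ℕ} (t : Fin m → A) (γ δ : Fin m →₀ ℕ) :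
    mon t (γ + δ) = mon t γ * mon t δ := by
  simp [mon, pow_add, Finset.prod_mul_distrib]

theorem mon_single {A : Type*} [CommRing A] {m : ℕ} (t : Fin m → A) (i : Fin m) (d : ℕ) :
    mon t (Finsupp.single i d) = t i ^ d := by
  rw [mon, Finset.prod_eq_single i]
  · simp
  · intro j _ hj; simp [Finsupp.single_apply, hj.symm]
  · simp

theorem mon_zero {A : Type*} [CommRing A] {m : ℕ} (t : Fin m → A) : mon t 0 = 1 := by simp [mon]

theorem mon_mem {A : Type*} [CommRing A] {m : ℕ} (t : Fin m → A) (M : Ideal A)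
    (h : ∀ i, t i ∈ M) (γ : Fin m →₀ ℕ) : mon t γ ∈ M ^ γ.degree := by
  have h1 : mon t γ ∈ ∏ i, M ^ γ i :=
    Ideal.prod_mem_prod fun i _ => Ideal.pow_mem_pow (h i) _
  rwa [Finset.prod_pow_eq_pow_sum, ← Finsupp.degree_eq_sum] at h1

theorem mon_left {A : Type*} [CommRing A] {n k : ℕ} (t : Fin (n + k) → A) (β : Fin n →₀ ℕ) :
    mon t (Finsupp.mapDomain (Fin.castAdd k) β) = mon (fun i => t (Fin.castAdd k i)) β := by
  rw [mon, Fin.prod_univ_add, mon]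
  have h : ∀ i : Fin k, Finsupp.mapDomain (Fin.castAdd k) β (Fin.natAdd n i) = 0 := by
    intro i
    apply Finsupp.mapDomain_of_notMem_range
    rintro ⟨a, ha⟩
    have := congrArg Fin.val ha
    simp at this
    omega
  simp [h, Finsupp.mapDomain_apply (Fin.castAdd_injective n k)]

theorem ffac_left {K : Type*} [Field K] {n k : ℕ} (β : Fin n →₀ ℕ) :
    ffac K (Finsupp.mapDomain (Fin.castAdd k) β) = ffac K β := by
  rw [ffac, Fin.prod_univ_add, ffac]
  have h : ∀ i : Fin k, Finsupp.mapDomain (Fin.castAdd k) β (Fin.natAdd n i) = 0 := by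
    intro i
    apply Finsupp.mapDomain_of_notMem_range
    rintro ⟨a, ha⟩
    have := congrArg Fin.val ha
    simp at this
    omega
  simp [h, Finsupp.mapDomain_apply (Fin.castAdd_injective n k)]

theorem ffac_single_two {K : Type*} [Field K] {m : ℕ} (i : Fin m) :
    ffac K (Finsupp.single i 2) = 2 := by
  rw [ffac, Finset.prod_eq_single i]
  · simp
  · intro j _ hj; simp [Finsupp.single_apply, hj.symm]
  · simp

theorem LL_lin {K : Type*} [Field K] {m : ℕ} (F : MvPolynomial (Fin m) K) (γ : Fin m →₀ ℕ)
    (l : Fin m → K) :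
    LL F (MvPowerSeries.monomial γ 1 * linForm l) =
      ∑ s, l s * (ffac K (γ + Finsupp.single s 1) *
        MvPolynomial.coeff (γ + Finsupp.single s 1) F) := by
  rw [linForm, Finset.mul_sum, map_sum]
  refine Finset.sum_congr rfl fun s _ => ?_
  rw [MvPowerSeries.monomial_mul_monomial, LL_monomial, one_mul]

theorem single_ne_two {m : ℕ} (i : Fin m) (γ : Fin m →₀ ℕ) :
    Finsupp.single i 1 + γ = Finsupp.single i 2 ↔ γ = Finsupp.single i 1 := by
  rw [show (2 : ℕ) = 1 + 1 from rfl, Finsupp.single_add, add_right_inj]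

open IsLocalRing in
theorem mid_pow {K : Type*} [Field K] {A : Type*} [CommRing A] [IsLocalRing A]
    [Algebra K A] (m4 : maximalIdeal A ^ 4 = ⊥) :
    (∀ x ∈ maximalIdeal A ^ 2, ∀ y ∈ maximalIdeal A ^ 2, x * y = 0) ∧
    (∀ x ∈ maximalIdeal A ^ 3, ∀ y ∈ maximalIdeal A, x * y = 0) := by
  constructor
  · intro x hx y hy
    have : x * y ∈ maximalIdeal A ^ (2 + 2) := by
      rw [pow_add]; exact Ideal.mul_mem_mul hx hy
    rw [m4] at this
    exact (Submodule.mem_bot A).1 this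
  · intro x hx y hy
    have : x * y ∈ maximalIdeal A ^ (3 + 1) := by
      rw [pow_succ]; exact Ideal.mul_mem_mul hx hy
    rw [m4] at this
    exact (Submodule.mem_bot A).1 this

theorem Mid.surj {K : Type*} [Field K] {A : Type*} [CommRing A] [IsLocalRing A]
    [Algebra K A] {n k : ℕ} {t : Fin n → A} {z : Fin k → A} {φ : A →ₗ[K] K} (h : Mid t z φ) :
    Function.Surjective (MvPolynomial.aeval (R := K) (Fin.append t z)) := by
  have h1 := mid_pow (K := K) h.m4
  rw [← AlgHom.range_eq_top, eq_top_iff]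
  intro a _
  refine surj_aux (IsLocalRing.maximalIdeal A) (IsLocalRing.maximalIdeal A ^ 2)
    (IsLocalRing.maximalIdeal A ^ 3) (pow_two _) (pow_succ _ _) h1.1 h1.2 _ ?_ a
  intro a
  obtain ⟨c, l, r, hh⟩ := h.span a
  refine ⟨_, ?_, hh⟩
  refine Subalgebra.add_mem _ (Subalgebra.add_mem _ (Subalgebra.algebraMap_mem _ _) ?_) ?_
  · refine Subalgebra.sum_mem _ fun i _ => Subalgebra.smul_mem _ ?_ _
    exact ⟨MvPolynomial.X (Fin.castAdd k i), by simp⟩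
  · refine Subalgebra.sum_mem _ fun i _ => Subalgebra.smul_mem _ ?_ _
    exact ⟨MvPolynomial.X (Fin.natAdd n i), by simp⟩

theorem Mid.res {K : Type*} [Field K] {A : Type*} [CommRing A] [IsLocalRing A]
    [Algebra K A] {n k : ℕ} {t : Fin n → A} {z : Fin k → A} {φ : A →ₗ[K] K} (h : Mid t z φ)
    (a : A) : ∃ c : K, a - algebraMap K A c ∈ IsLocalRing.maximalIdeal A := by
  obtain ⟨c, l, r, hh⟩ := h.span a
  refine ⟨c, ?_⟩
  have h0 := Ideal.pow_le_self two_ne_zero hh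
  have h1 : ∑ i, l i • t i ∈ (IsLocalRing.maximalIdeal A).restrictScalars K :=
    Submodule.sum_mem _ fun i _ => Submodule.smul_mem _ _ (h.tm i)
  have h2 : ∑ i, r i • z i ∈ (IsLocalRing.maximalIdeal A).restrictScalars K :=
    Submodule.sum_mem _ fun i _ => Submodule.smul_mem _ _ (h.zm i)
  have := (IsLocalRing.maximalIdeal A).add_mem h0 ((IsLocalRing.maximalIdeal A).add_mem h1 h2)
  convert this using 1
  ring

theorem Mid.finite {K : Type*} [Field K] {A : Type*} [CommRing A] [IsLocalRing A]
    [Algebra K A] {n k : ℕ} {t : Fin n → A} {z : Fin k → A} {φ : A →ₗ[K] K} (h : Mid t z φ) :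
    FiniteDimensional K A := by
  have : Algebra.FiniteType K A := Algebra.FiniteType.of_surjective _ h.surj
  have : Algebra.IsIntegral K A := by
    constructor
    intro a
    obtain ⟨c, hc⟩ := h.res a
    have h1 : IsIntegral K (a - algebraMap K A c) := by
      refine ⟨Polynomial.X ^ 4, Polynomial.monic_X_pow 4, ?_⟩
      have := Ideal.pow_mem_pow hc 4
      rw [h.m4] at this
      simpa using this
    have := h1.add (isIntegral_algebraMap (x := c))
    rwa [sub_add_cancel] at this
  exact Algebra.IsIntegral.finite


theorem Mid.data {K : Type*} [Field K] [CharZero K] {A : Type*} [CommRing A] [IsLocalRing A]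
    [Algebra K A] {n k : ℕ} {t : Fin n → A} {z : Fin k → A} {φ : A →ₗ[K] K} (h : Mid t z φ)
    (p1 : φ 1 = 0) (pt : ∀ i, φ (t i) = 0) (pz : ∀ i, φ (z i) = 0) :
    ∃ F3 : MvPolynomial (Fin n) K, F3.IsHomogeneous 3 ∧ nondegenerate F3 ∧
      DataFor (MvPolynomial.rename (Fin.castAdd k) F3 + quadF K n (n + k)) (Fin.append t z) φ := by
  classical
  set F3 : MvPolynomial (Fin n) K := ∑ β ∈ Finset.finsuppAntidiag Finset.univ 3,
    MvPolynomial.monomial β (φ (mon t β) / ffac K β) with hF3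
  have hc : ∀ β, ffac K β * MvPolynomial.coeff β F3 =
      if β.degree = 3 then φ (mon t β) else 0 := by
    intro β
    have e : MvPolynomial.coeff β F3 =
        if β.degree = 3 then φ (mon t β) / ffac K β else 0 := by
      rw [hF3, MvPolynomial.coeff_sum]
      simp only [MvPolynomial.coeff_monomial]
      rw [Finset.sum_ite_eq']
      simp [Finset.mem_finsuppAntidiag, Finsupp.degree_eq_sum]
    rw [e]
    split_ifs
    · exact mul_div_cancel₀ _ (ffac_ne_zero β)
    · simp
  refine ⟨F3, ?_, ?_, h.surj, h.nd, ?_⟩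
  · refine MvPolynomial.IsHomogeneous.sum _ _ _ fun β hβ => MvPolynomial.isHomogeneous_monomial _ ?_
    rw [Finset.mem_finsuppAntidiag] at hβ
    rw [Finsupp.degree_eq_sum]; exact hβ.1
  · intro l hl
    apply h.ndc
    intro i j
    rw [mem_annR_iff_mon] at hl
    have := hl (Finsupp.single i 1 + Finsupp.single j 1)
    rw [LL_lin] at this
    rw [← this, Finset.sum_mul, map_sum]
    refine Finset.sum_congr rfl fun s _ => ?_
    rw [hc, if_pos (by simp [map_add, Finsupp.degree_single]), smul_mul_assoc, map_smul,
      smul_eq_mul, mon_add, mon_add, mon_single, mon_single, mon_single]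
    simp only [pow_one]
    rw [mul_comm (t s)]
  · intro γ
    change φ (mon _ γ) = _
    rcases gamma_cases γ with ⟨β, rfl⟩ | ⟨i, hi⟩
    · rw [coeffF_left, ffac_left, hc, mon_left]
      simp only [Fin.append_left]
      split_ifs with h3
      · rfl
      · obtain h0 | h0 | h0 | h0 : β.degree = 0 ∨ β.degree = 1 ∨ β.degree = 2 ∨ 4 ≤ β.degree := by
          omega
        · rw [Finsupp.degree_eq_zero_iff] at h0
          rw [h0, mon_zero, p1]
        · obtain ⟨i, rfl⟩ := degree_one _ h0
          rw [mon_single, pow_one, pt]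
        · obtain ⟨i, j, rfl⟩ := degree_two _ h0
          rw [mon_add, mon_single, mon_single, pow_one, pow_one, h.tt]
        · have := Ideal.pow_le_pow_right h0 (mon_mem t _ h.tm β)
          rw [h.m4] at this
          rw [(Submodule.mem_bot A).1 this, map_zero]
    · rw [coeffF_right _ _ i hi]
      obtain ⟨γ', rfl⟩ := exists_dec _ _ hi
      simp only [single_ne_two]
      rw [mon_add, mon_single, pow_one, Fin.append_right]
      obtain h0 | h0 | h0 : γ'.degree = 0 ∨ γ'.degree = 1 ∨ 2 ≤ γ'.degree := by omega
      · rw [Finsupp.degree_eq_zero_iff] at h0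
        rw [h0, mon_zero, mul_one, pz, if_neg, mul_zero]
        exact (Finsupp.single_ne_zero.2 one_ne_zero).symm
      · obtain ⟨s, rfl⟩ := degree_one _ h0
        rw [mon_single, pow_one]
        have e : Finsupp.single s 1 = Finsupp.single (Fin.natAdd n i) 1 ↔ s = Fin.natAdd n i :=
          Finsupp.single_left_inj one_ne_zero
        simp only [e]
        refine Fin.addCases (fun j => ?_) (fun j => ?_) s
        · rw [Fin.append_left, mul_comm, h.tz, if_neg, mul_zero]
          intro hh
          have := congrArg Fin.val hh
          simp at this
          omega
        · rw [Fin.append_right, h.zz]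
          by_cases hij : i = j
          · subst hij
            have : Finsupp.single (Fin.natAdd n i) 1 + Finsupp.single (Fin.natAdd n i) 1 =
              Finsupp.single (Fin.natAdd n i) 2 := (single_ne_two _ _).2 rfl
            rw [this, ffac_single_two]; simp
          · rw [if_neg hij, if_neg, mul_zero]
            intro hh
            exact hij ((Fin.natAdd_injective k n) hh).symm
      · rw [h.zw, map_zero, if_neg, mul_zero]
        · rintro rfl
          rw [Finsupp.degree_single] at h0; omega
        · refine Ideal.pow_le_pow_right h0 (mon_mem _ _ ?_ γ')
          intro s
          refine Fin.addCases (fun j => ?_) (fun j => ?_) s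
          · rw [Fin.append_left]; exact h.tm j
          · rw [Fin.append_right]; exact h.zm j

theorem aeval_mon {K : Type*} [Field K] {A : Type*} [CommRing A] [Algebra K A] {m : ℕ}
    (t : Fin m → A) (γ : Fin m →₀ ℕ) (c : K) :
    MvPolynomial.aeval t (MvPolynomial.monomial γ c) = c • mon t γ := by
  rw [MvPolynomial.aeval_monomial, Finsupp.prod_fintype _ _ (fun i => pow_zero _), Algebra.smul_def]
  rfl

theorem monzero {K : Type*} [Field K] {A : Type*} [CommRing A] [Algebra K A] {m : ℕ}
    {F : MvPolynomial (Fin m) K} {t : Fin m → A} {φ : A →ₗ[K] K} (h : DataFor F t φ)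
    (γ : Fin m →₀ ℕ) (h0 : ∀ γ', MvPolynomial.coeff (γ + γ') F = 0) : mon t γ = 0 := by
  apply h.2.1
  intro b
  obtain ⟨p, rfl⟩ := h.1 b
  induction p using MvPolynomial.induction_on' with
  | monomial γ' c =>
    rw [aeval_mon, mul_smul_comm, map_smul, ← mon_add, mon, h.2.2, h0, mul_zero, smul_zero]
  | add p q hp hq => rw [map_add, mul_add, map_add, hp, hq, add_zero]

theorem Fzero {K : Type*} [Field K] {n k : ℕ} {F3 : MvPolynomial (Fin n) K}
    (hF : F3.IsHomogeneous 3) (γ : Fin (n + k) →₀ ℕ) (hγ : 4 ≤ γ.degree) :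
    MvPolynomial.coeff γ (MvPolynomial.rename (Fin.castAdd k) F3 + quadF K n (n + k)) = 0 := by
  rcases gamma_cases γ with ⟨β, rfl⟩ | ⟨i, hi⟩
  · rw [coeffF_left]
    apply hF.coeff_eq_zero
    have : (Finsupp.mapDomain (Fin.castAdd k) β).degree = β.degree := by
      rw [Finsupp.degree_eq_sum, Finsupp.degree_eq_sum, Fin.sum_univ_add]
      have h : ∀ i : Fin k, Finsupp.mapDomain (Fin.castAdd k) β (Fin.natAdd n i) = 0 := by
        intro i
        apply Finsupp.mapDomain_of_notMem_range
        rintro ⟨a, ha⟩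
        have := congrArg Fin.val ha
        simp at this
        omega
      simp [h, Finsupp.mapDomain_apply (Fin.castAdd_injective n k)]
    omega
  · rw [coeffF_right _ _ i hi, if_neg]
    rintro rfl
    rw [Finsupp.degree_single] at hγ; omega

theorem max_eq_span {K : Type*} [Field K] {A : Type*} [CommRing A] [IsLocalRing A]
    [Algebra K A] {m : ℕ} (t : Fin m → A)
    (hs : Function.Surjective (MvPolynomial.aeval (R := K) t))
    (ht : ∀ i, t i ∈ IsLocalRing.maximalIdeal A) :
    IsLocalRing.maximalIdeal A = Ideal.span (Set.range t) := by
  have hle : Ideal.span (Set.range t) ≤ IsLocalRing.maximalIdeal A := by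
    rw [Ideal.span_le]; rintro _ ⟨i, rfl⟩; exact ht i
  refine le_antisymm ?_ hle
  intro a ha
  have key : ∀ p : MvPolynomial (Fin m) K, ∃ c : K,
      MvPolynomial.aeval t p - algebraMap K A c ∈ Ideal.span (Set.range t) := by
    intro p
    induction p using MvPolynomial.induction_on with
    | C a => exact ⟨a, by simp⟩
    | add p q hp hq =>
      obtain ⟨c, hc⟩ := hp
      obtain ⟨d, hd⟩ := hq
      refine ⟨c + d, ?_⟩
      have := Ideal.add_mem _ hc hd
      rw [map_add, map_add]
      convert this using 1
      ring
    | mul_X p i _ =>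
      refine ⟨0, ?_⟩
      rw [map_zero, sub_zero, map_mul, MvPolynomial.aeval_X]
      exact Ideal.mul_mem_left _ _ (Ideal.subset_span ⟨i, rfl⟩)
  obtain ⟨p, rfl⟩ := hs a
  obtain ⟨c, hc⟩ := key p
  have h1 := Ideal.sub_mem _ ha (hle hc)
  rw [sub_sub_cancel] at h1
  have hc0 : c = 0 := by
    by_contra hne
    exact (IsLocalRing.mem_maximalIdeal _).1 h1 ((IsUnit.mk0 c hne).map (algebraMap K A))
  rwa [hc0, map_zero, sub_zero] at hc

theorem span_pow_zero {A : Type*} [CommRing A] {m : ℕ} (t : Fin m → A) (d : ℕ) (y : A)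
    (h : ∀ γ : Fin m →₀ ℕ, γ.degree = d → y * mon t γ = 0) :
    ∀ w ∈ Ideal.span (Set.range t) ^ d, y * w = 0 := by
  induction d generalizing y with
  | zero =>
    intro w _
    have := h 0 (by simp)
    rw [mon_zero, mul_one] at this
    rw [this, zero_mul]
  | succ d ih =>
    intro w hw
    rw [pow_succ] at hw
    induction hw using Submodule.mul_induction_on' with
    | mem_mul_mem a ha b hb =>
      rw [← mul_assoc]
      induction hb using Submodule.span_induction with
      | mem x hx =>
        obtain ⟨i, rfl⟩ := hx
        rw [mul_right_comm]
        refine ih (y * t i) ?_ a ha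
        intro γ hγ
        have := h (Finsupp.single i 1 + γ) (by rw [map_add, Finsupp.degree_single, hγ]; omega)
        rwa [mon_add, mon_single, pow_one, ← mul_assoc] at this
      | zero => simp
      | add u v _ _ hu hv => rw [mul_add, hu, hv, add_zero]
      | smul c u _ hu => rw [smul_eq_mul, mul_left_comm, hu, mul_zero]
    | add u _ v _ hu hv => rw [mul_add, hu, hv, add_zero]

theorem Mid.of_data {K : Type*} [Field K] [CharZero K] {A : Type*} [CommRing A] [IsLocalRing A]
    [Algebra K A] {n k : ℕ} {F3 : MvPolynomial (Fin n) K} (hF : F3.IsHomogeneous 3)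
    (hF' : nondegenerate F3) {t : Fin (n + k) → A} {φ : A →ₗ[K] K}
    (h : DataFor (MvPolynomial.rename (Fin.castAdd k) F3 + quadF K n (n + k)) t φ) :
    Mid (fun i => t (Fin.castAdd k i)) (fun i => t (Fin.natAdd n i)) φ := by
  have mz : ∀ γ : Fin (n + k) →₀ ℕ, 4 ≤ γ.degree → mon t γ = 0 := by
    intro γ hγ
    refine monzero h γ fun γ' => Fzero hF _ ?_
    rw [map_add]; omega
  have tm : ∀ i, t i ∈ IsLocalRing.maximalIdeal A := by
    intro i
    have := mz (Finsupp.single i 4) (by rw [Finsupp.degree_single])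
    rw [mon_single] at this
    rw [IsLocalRing.mem_maximalIdeal]
    intro hu
    have := hu.pow 4
    rw [‹t i ^ 4 = 0›] at this
    exact not_isUnit_zero this
  have hM := max_eq_span t h.1 tm
  have pv : ∀ γ, φ (mon t γ) = _ := h.2.2
  have pl : ∀ β : Fin n →₀ ℕ, φ (mon (fun i => t (Fin.castAdd k i)) β) =
      ffac K β * MvPolynomial.coeff β F3 := by
    intro β
    rw [← mon_left, pv, coeffF_left, ffac_left]
  have pr : ∀ (i : Fin k) (s : Fin (n + k)), φ (t s * t (Fin.natAdd n i)) =
      if s = Fin.natAdd n i then 2 else 0 := by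
    intro i s
    have e := pv (Finsupp.single (Fin.natAdd n i) 1 + Finsupp.single s 1)
    rw [coeffF_right _ _ i (by simp), mon_add, mon_single, mon_single, pow_one, pow_one, mul_comm] at e
    simp only [single_ne_two, Finsupp.single_left_inj (one_ne_zero (α := ℕ))] at e
    rw [e]
    split_ifs with hs
    · rw [hs, (single_ne_two _ _).2 rfl, ffac_single_two, mul_one]
    · rw [mul_zero]
  refine ⟨h.2.1, fun i => tm _, fun i => tm _, ?_, ?_, ?_, ?_, ?_, ?_, ?_⟩
  · intro a
    obtain ⟨p, rfl⟩ := h.1 a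
    induction p using MvPolynomial.induction_on' with
    | monomial γ c =>
      rw [aeval_mon]
      obtain h0 | h0 | h0 : γ.degree = 0 ∨ γ.degree = 1 ∨ 2 ≤ γ.degree := by omega
      · rw [Finsupp.degree_eq_zero_iff] at h0
        refine ⟨c, 0, 0, ?_⟩
        rw [h0, mon_zero]
        simp [Algebra.algebraMap_eq_smul_one]
      · obtain ⟨s, rfl⟩ := degree_one _ h0
        rw [mon_single, pow_one]
        refine Fin.addCases (fun j => ?_) (fun j => ?_) s
        · refine ⟨0, Pi.single j c, 0, ?_⟩
          simp [Pi.single_apply, ite_smul]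
        · refine ⟨0, 0, Pi.single j c, ?_⟩
          simp [Pi.single_apply, ite_smul]
      · refine ⟨0, 0, 0, ?_⟩
        have := Ideal.pow_le_pow_right h0 (mon_mem t _ tm γ)
        have := Submodule.smul_of_tower_mem _ c this
        simpa using this
    | add p q hp hq =>
      obtain ⟨c, l, r, hp⟩ := hp
      obtain ⟨c', l', r', hq⟩ := hq
      refine ⟨c + c', l + l', r + r', ?_⟩
      have := Ideal.add_mem _ hp hq
      convert this using 1
      simp only [map_add, Pi.add_apply, add_smul, Finset.sum_add_distrib]
      ring
  · intro i j
    have := pl (Finsupp.single i 1 + Finsupp.single j 1)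
    rw [hF.coeff_eq_zero, mul_zero, mon_add, mon_single, mon_single, pow_one, pow_one] at this
    · exact this
    · simp [map_add, Finsupp.degree_single]
  · intro i j
    rw [pr, if_neg]
    intro hh
    have := congrArg Fin.val hh
    simp at this
    omega
  · intro i j
    rw [pr]
    simp only [(Fin.natAdd_injective k n).eq_iff]
  · intro i
    rw [hM]
    refine span_pow_zero t 2 _ ?_
    intro γ hγ
    have : mon t (Finsupp.single (Fin.natAdd n i) 1 + γ) = 0 := by
      refine monzero h _ fun γ' => ?_
      rw [coeffF_right _ _ i (by simp), if_neg]
      intro hh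
      have := congrArg Finsupp.degree hh
      rw [map_add, map_add, Finsupp.degree_single, Finsupp.degree_single, hγ] at this
      omega
    rwa [mon_add, mon_single, pow_one] at this
  · intro l hl
    apply hF'
    rw [mem_annR_iff_mon]
    intro γ
    rw [LL_lin]
    by_cases h2 : γ.degree = 2
    · obtain ⟨i, j, rfl⟩ := degree_two _ h2
      rw [← hl i j, Finset.sum_mul, map_sum]
      refine Finset.sum_congr rfl fun s _ => ?_
      rw [← pl, smul_mul_assoc, map_smul,
        smul_eq_mul, mon_add, mon_add, mon_single, mon_single, mon_single]
      simp only [pow_one]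
      rw [mul_comm (t (Fin.castAdd k s))]
    · refine Finset.sum_eq_zero fun s _ => ?_
      rw [hF.coeff_eq_zero, mul_zero, mul_zero]
      rw [map_add, Finsupp.degree_single]; omega
  · rw [eq_bot_iff]
    intro w hw
    rw [hM] at hw
    have := span_pow_zero t 4 1 (fun γ hγ => by rw [one_mul, mz _ hγ.ge]) w hw
    rw [one_mul] at this
    exact (Submodule.mem_bot A).2 this

theorem quot_dim {K : Type*} [Field K] {A : Type*} [CommRing A]
    [Algebra K A] [FiniteDimensional K A] (I : Ideal A) :
    Module.finrank K (A ⧸ I) + Module.finrank K (I.restrictScalars K) = Module.finrank K A := by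
  rw [← Submodule.finrank_quotient_add_finrank (I.restrictScalars K)]
  rw [(Submodule.Quotient.restrictScalarsEquiv K I).finrank_eq]

theorem bot_dim {K : Type*} [Field K] {A : Type*} [CommRing A]
    [Algebra K A] (I : Ideal A) (h : I = ⊥) :
    Module.finrank K (A ⧸ I) = Module.finrank K A := by
  subst h
  exact (AlgEquiv.quotientBot K A).toLinearEquiv.finrank_eq

theorem bot_fin {K : Type*} [Field K] {A : Type*} [CommRing A]
    [Algebra K A] (I : Ideal A) (h : I = ⊥) (h0 : 0 < Module.finrank K (A ⧸ I)) :
    FiniteDimensional K A := by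
  rw [bot_dim I h] at h0
  exact Module.finite_of_finrank_pos h0

theorem top_dim {K : Type*} [Field K] {A : Type*} [CommRing A]
    [Algebra K A] (I : Ideal A) (h : I = ⊤) :
    Module.finrank K (A ⧸ I) = 0 := by
  subst h
  have : Subsingleton (A ⧸ (⊤ : Ideal A)) := Ideal.Quotient.subsingleton_iff.2 rfl
  exact Module.finrank_zero_of_subsingleton

theorem soc_aux {K : Type*} [Field K] {A : Type*} [CommRing A]
    [Algebra K A] [FiniteDimensional K A] (M I3 : Ideal A)
    (e31 : ∀ x ∈ I3, ∀ y ∈ M, x * y = 0)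
    (d3 : Module.finrank K (I3.restrictScalars K) = 1)
    (ds : Module.finrank K ((Submodule.colon (⊥ : Ideal A) M).restrictScalars K) = 1)
    (s : A) (hs : ∀ x ∈ M, s * x = 0) : s ∈ I3 := by
  have mem : ∀ x, x ∈ (Submodule.colon (⊥ : Ideal A) M).restrictScalars K ↔ ∀ y ∈ M, x * y = 0 := by
    intro x
    rw [Submodule.restrictScalars_mem, Submodule.mem_colon]
    simp
  have hle : I3.restrictScalars K ≤ (Submodule.colon (⊥ : Ideal A) M).restrictScalars K := by
    intro x hx
    exact (mem x).2 fun y hy => e31 x hx y hy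
  have := Submodule.eq_of_le_of_finrank_eq hle (d3.trans ds.symm)
  have h2 := (mem s).2 hs
  rw [← this] at h2
  exact h2

theorem part_fwd {K : Type*} [Field K] [IsAlgClosed K] [CharZero K] {k n : ℕ}
    (hn : 1 ≤ n) (A : Type*) [CommRing A] [IsLocalRing A] [Algebra K A]
    (hr : residueFieldIsK K A) (hs : socDimLoc K A = 1) (h0 : hilbLoc K A 0 = 1)
    (h1 : hilbLoc K A 1 = n + k) (h2 : hilbLoc K A 2 = n) (h3 : hilbLoc K A 3 = 1)
    (h4 : IsLocalRing.maximalIdeal A ^ 4 = ⊥) :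
    ∃ F3 : MvPolynomial (Fin n) K, F3.IsHomogeneous 3 ∧ nondegenerate F3 ∧
      Nonempty (A ≃ₐ[K] (MvPowerSeries (Fin (n + k)) K ⧸
        annR (MvPolynomial.rename (Fin.castAdd k) F3 + quadF K n (n + k)))) := by
  change Module.finrank K (A ⧸ (IsLocalRing.maximalIdeal A ^ 1)) -
    Module.finrank K (A ⧸ (IsLocalRing.maximalIdeal A ^ 0)) = 1 at h0
  change Module.finrank K (A ⧸ (IsLocalRing.maximalIdeal A ^ 2)) -
    Module.finrank K (A ⧸ (IsLocalRing.maximalIdeal A ^ 1)) = n + k at h1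
  change Module.finrank K (A ⧸ (IsLocalRing.maximalIdeal A ^ 3)) -
    Module.finrank K (A ⧸ (IsLocalRing.maximalIdeal A ^ 2)) = n at h2
  change Module.finrank K (A ⧸ (IsLocalRing.maximalIdeal A ^ 4)) -
    Module.finrank K (A ⧸ (IsLocalRing.maximalIdeal A ^ 3)) = 1 at h3
  unfold socDimLoc at hs
  have t0 := top_dim (K := K) (IsLocalRing.maximalIdeal A ^ 0) (by rw [pow_zero, Ideal.one_eq_top])
  have t4 := bot_dim (K := K) _ h4
  have fd : FiniteDimensional K A := bot_fin _ h4 (by omega)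
  have q1 := quot_dim (K := K) (IsLocalRing.maximalIdeal A ^ 1)
  have q2 := quot_dim (K := K) (IsLocalRing.maximalIdeal A ^ 2)
  have q3 := quot_dim (K := K) (IsLocalRing.maximalIdeal A ^ 3)
  have d3 : Module.finrank K ((IsLocalRing.maximalIdeal A ^ 3).restrictScalars K) = 1 := by omega
  have d2 : Module.finrank K ((IsLocalRing.maximalIdeal A ^ 2).restrictScalars K) = n + 1 := by
    omega
  have d1 : Module.finrank K ((IsLocalRing.maximalIdeal A ^ 1).restrictScalars K) =
    n + k + n + 1 := by omega
  have dA : Module.finrank K A = n + k + n + 2 := by omega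
  rw [pow_one] at d1
  have hsoc := soc_aux (K := K) (IsLocalRing.maximalIdeal A) (IsLocalRing.maximalIdeal A ^ 3)
    (mid_pow (K := K) h4).2 d3 hs
  have hres : ∀ a : A, ∃ c : K, a - algebraMap K A c ∈ IsLocalRing.maximalIdeal A := by
    intro a
    obtain ⟨c, hc⟩ := hr.2 (IsLocalRing.residue A a)
    refine ⟨c, ?_⟩
    rw [← IsLocalRing.residue_eq_zero_iff, map_sub, ← hc, sub_eq_zero]
    rfl
  obtain ⟨t, z, φ, hm, p1, pt, pz⟩ := fwd h4 hres dA d1 d2 d3 hsoc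
  obtain ⟨F3, a, b, c⟩ := hm.data p1 pt pz
  exact ⟨F3, a, b, iso_of_data _ _ _ c⟩

theorem part_rev {K : Type*} [Field K] [IsAlgClosed K] [CharZero K] {k n : ℕ}
    (hn : 1 ≤ n) (A : Type*) [CommRing A] [IsLocalRing A] [Algebra K A]
    (F3 : MvPolynomial (Fin n) K) (hF : F3.IsHomogeneous 3) (hF' : nondegenerate F3)
    (e : A ≃ₐ[K] (MvPowerSeries (Fin (n + k)) K ⧸
        annR (MvPolynomial.rename (Fin.castAdd k) F3 + quadF K n (n + k)))) :
    (IsArtinianRing A ∧ residueFieldIsK K A ∧ socDimLoc K A = 1 ∧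
      hilbLoc K A 0 = 1 ∧ hilbLoc K A 1 = n + k ∧ hilbLoc K A 2 = n ∧ hilbLoc K A 3 = 1 ∧
      IsLocalRing.maximalIdeal A ^ 4 = ⊥) := by
  obtain ⟨t, φ, hd⟩ := data_of_iso _ e
  have hm := Mid.of_data hF hF' hd
  have fd : FiniteDimensional K A := hm.finite
  have hr : residueFieldIsK K A := by
    refine ⟨(algebraMap K (IsLocalRing.ResidueField A)).injective, ?_⟩
    intro b
    obtain ⟨a, rfl⟩ := IsLocalRing.residue_surjective b
    obtain ⟨c, hc⟩ := hm.res a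
    refine ⟨c, ?_⟩
    rw [← IsLocalRing.residue_eq_zero_iff, map_sub, sub_eq_zero] at hc
    rw [hc]; rfl
  have hq1 : Module.finrank K (A ⧸ (IsLocalRing.maximalIdeal A)) = 1 := by
    have := (LinearEquiv.ofBijective (Algebra.linearMap K (IsLocalRing.ResidueField A))
      hr).finrank_eq
    rw [Module.finrank_self] at this
    exact this.symm
  have hq1' : Module.finrank K (A ⧸ (IsLocalRing.maximalIdeal A).restrictScalars K) = 1 := by
    rw [← hq1]
    exact (Submodule.Quotient.restrictScalarsEquiv K _).finrank_eq
  have mp := mid_pow (K := K) hm.m4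
  obtain ⟨dA, d1, d2, d3, ds⟩ := rev_aux hn (IsLocalRing.maximalIdeal A)
    (IsLocalRing.maximalIdeal A ^ 2) (IsLocalRing.maximalIdeal A ^ 3)
    ((Ideal.ne_top_iff_one _).1 (IsLocalRing.maximalIdeal.isMaximal A).ne_top)
    (pow_two _) (pow_succ _ _) mp.1 mp.2 _ _ φ hm.nd hm.tm hm.zm hm.span hm.tz hm.zz hm.zw hm.ndc
    hq1'
  have t0 := top_dim (K := K) (IsLocalRing.maximalIdeal A ^ 0) (by rw [pow_zero, Ideal.one_eq_top])
  have t4 := bot_dim (K := K) _ hm.m4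
  have q2 := quot_dim (K := K) (IsLocalRing.maximalIdeal A ^ 2)
  have q3 := quot_dim (K := K) (IsLocalRing.maximalIdeal A ^ 3)
  have t1 : Module.finrank K (A ⧸ (IsLocalRing.maximalIdeal A ^ 1)) = 1 := by
    rw [pow_one]; exact hq1
  refine ⟨IsArtinianRing.of_finite K A, hr, ds, ?_, ?_, ?_, ?_, hm.m4⟩
  · change Module.finrank K (A ⧸ (IsLocalRing.maximalIdeal A ^ 1)) -
    Module.finrank K (A ⧸ (IsLocalRing.maximalIdeal A ^ 0)) = 1
    omega
  · change Module.finrank K (A ⧸ (IsLocalRing.maximalIdeal A ^ 2)) -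
    Module.finrank K (A ⧸ (IsLocalRing.maximalIdeal A ^ 1)) = n + k
    omega
  · change Module.finrank K (A ⧸ (IsLocalRing.maximalIdeal A ^ 3)) -
    Module.finrank K (A ⧸ (IsLocalRing.maximalIdeal A ^ 2)) = n
    omega
  · change Module.finrank K (A ⧸ (IsLocalRing.maximalIdeal A ^ 4)) -
    Module.finrank K (A ⧸ (IsLocalRing.maximalIdeal A ^ 3)) = 1
    omega


/-- **Structure theorem.**  For `m > n ≥ 1`, a local `K`-algebra `A` is an
Artinian Gorenstein local ring with Hilbert function `{1,m,n,1}` iff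
`A ≅ A_F` for `F = F_3 + y_{n+1}^2 + ⋯ + y_m^2 ∈ K[y_1,…,y_m]` with `F_3` a
non-degenerate cubic form in `y_1,…,y_n`. -/
theorem gorenstein_1mn1_iff_normal_form
    {K : Type*} [Field K] [IsAlgClosed K] [CharZero K] {m n : ℕ}
    (hn : 1 ≤ n) (hnm : n < m)
    (A : Type*) [CommRing A] [IsLocalRing A] [Algebra K A] :
    (IsArtinianRing A ∧ residueFieldIsK K A ∧ socDimLoc K A = 1 ∧
      hilbLoc K A 0 = 1 ∧ hilbLoc K A 1 = m ∧ hilbLoc K A 2 = n ∧ hilbLoc K A 3 = 1 ∧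
      IsLocalRing.maximalIdeal A ^ 4 = ⊥) ↔
    (∃ F3 : MvPolynomial (Fin n) K, F3.IsHomogeneous 3 ∧ nondegenerate F3 ∧
      Nonempty (A ≃ₐ[K] (MvPowerSeries (Fin m) K ⧸
        annR (K := K) (n := m) (MvPolynomial.rename (Fin.castLE hnm.le) F3 +
          ∑ j ∈ Finset.univ.filter (fun j : Fin m => n ≤ (j : ℕ)),
            MvPolynomial.X j ^ 2)))) := by
  obtain ⟨k, rfl⟩ : ∃ k, m = n + k := ⟨m - n, by omega⟩
  constructor
  · rintro ⟨_, hr, hs, h0, h1, h2, h3, h4⟩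
    exact part_fwd hn A hr hs h0 h1 h2 h3 h4
  · rintro ⟨F3, hF, hF', ⟨e⟩⟩
    exact part_rev hn A F3 hF hF' e
end

section
/- Let m ≥ n, and let A = A_F and B = A_G be Artinian Gorenstein local K-algebras with Hilbert function {1,m,n,1}, where F, G ∈ K[y_1,…,y_m] are polynomials of degree three with top-degree (cubic) forms F_3 and G_3. Then A and B are isomorphic as K-algebras if and only if Q_A(0) = R/Ann_R(F_3) and Q_B(0) = R/Ann_R(G_3) are isomorphic as K-algebras. -/
/-- The maximal ideal `M = (x_1, …, x_n)` of `R = K[[x_1,…,x_n]]`,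
i.e. the ideal of power series with zero constant term. -/
noncomputable def mxR (K : Type*) [Field K] (n : ℕ) : Ideal (MvPowerSeries (Fin n) K) :=
  RingHom.ker (MvPowerSeries.constantCoeff (σ := Fin n) (R := K))

/-- The Hilbert function of `A = R/I` where `R = K[[x_1,…,x_n]]`:
`HF_A(i) = dim_K (m^i/m^(i+1)) = dim_K A/m^(i+1) - dim_K A/m^i`, computed via
`A/m^j = R/(I + M^j)` where `M = (x_1,…,x_n)`. -/
noncomputable def hilbQ {K : Type*} [Field K] {n : ℕ}
    (I : Ideal (MvPowerSeries (Fin n) K)) (i : ℕ) : ℕ :=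
  Module.finrank K (MvPowerSeries (Fin n) K ⧸ (I ⊔ mxR K n ^ (i + 1))) -
    Module.finrank K (MvPowerSeries (Fin n) K ⧸ (I ⊔ mxR K n ^ i))

namespace GorAux

open MvPolynomial


variable {K : Type*} [Field K] {m : ℕ}

/-- largest ideal in the kernel of a functional -/
def II (Λ : MvPolynomial (Fin m) K →ₗ[K] K) : Ideal (MvPolynomial (Fin m) K) where
  carrier := {p | ∀ u, Λ (u * p) = 0}
  zero_mem' := fun u => by simp
  add_mem' := fun {a b} ha hb u => by rw [mul_add, map_add, ha u, hb u, add_zero]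
  smul_mem' := fun c f hf u => by rw [smul_eq_mul, ← mul_assoc]; exact hf (u * c)

theorem mem_II (Λ : MvPolynomial (Fin m) K →ₗ[K] K) (p) : p ∈ II Λ ↔ ∀ u, Λ (u * p) = 0 := Iff.rfl

/-- linear form -/
noncomputable def lf : (Fin m → K) →ₗ[K] MvPolynomial (Fin m) K :=
  Fintype.linearCombination K (fun i => (X i : MvPolynomial (Fin m) K))

theorem lf_apply (v : Fin m → K) : lf v = ∑ i, v i • (X i : MvPolynomial (Fin m) K) := rfl

theorem lf_single (i : Fin m) : lf (Pi.single i (1 : K)) = X i := by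
  rw [lf, Fintype.linearCombination_apply_single, one_smul]

theorem X_mem (i : Fin m) : (X i : MvPolynomial (Fin m) K) ∈ idealOfVars (Fin m) K :=
  Ideal.subset_span ⟨i, rfl⟩

theorem lf_mem (v : Fin m → K) : lf v ∈ idealOfVars (Fin m) K := by
  rw [lf_apply]
  refine Ideal.sum_mem _ fun i _ => ?_
  rw [smul_eq_C_mul]
  exact Ideal.mul_mem_left _ _ (X_mem i)

theorem mem_M_iff (p : MvPolynomial (Fin m) K) :
    p ∈ idealOfVars (Fin m) K ↔ constantCoeff p = 0 := by
  have := mem_pow_idealOfVars_iff' (σ := Fin m) (R := K) 1 p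
  rw [pow_one] at this
  rw [this]
  constructor
  · intro h; exact h 0 (by simp)
  · intro h x hx
    have : x = 0 := by
      rw [Nat.lt_one_iff] at hx
      exact (Finsupp.degree_eq_zero_iff x).1 hx
    subst this; exact h

/-- the linear coefficient vector -/
noncomputable def lin : MvPolynomial (Fin m) K →ₗ[K] (Fin m → K) :=
  LinearMap.pi fun i => lcoeff K (Finsupp.single i 1)

theorem sub_lin_mem (p : MvPolynomial (Fin m) K) :
    p - C (constantCoeff p) - lf (lin p) ∈ idealOfVars (Fin m) K ^ 2 := by
  rw [mem_pow_idealOfVars_iff']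
  intro x hx
  have hlf : ∀ (v : Fin m → K) (y : Fin m →₀ ℕ), coeff y (lf v) = ∑ i, v i * (if Finsupp.single i 1 = y then 1 else 0) := by
    intro v y
    rw [lf_apply, coeff_sum]
    refine Finset.sum_congr rfl fun i _ => ?_
    rw [coeff_smul, coeff_X, smul_eq_mul]
  rw [coeff_sub, coeff_sub, hlf, coeff_C]
  rcases Nat.lt_succ_iff_lt_or_eq.1 hx with h | h
  · have : x = 0 := by
      rw [Nat.lt_one_iff] at h
      exact (Finsupp.degree_eq_zero_iff x).1 h
    subst this
    simp [constantCoeff_eq]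
  · obtain ⟨i, rfl⟩ : ∃ i, x = Finsupp.single i 1 := by
      exact (Finsupp.sum_eq_one_iff x).mp h
    have h0 : (0 : Fin m →₀ ℕ) ≠ Finsupp.single i 1 := fun h => by
      have := DFunLike.congr_fun h i
      simp at this
    simp [lin, Finsupp.single_left_inj, h0]

theorem exists_surj_mod (φ : MvPolynomial (Fin m) K →ₐ[K] MvPolynomial (Fin m) K)
    (χ : Fin m → MvPolynomial (Fin m) K)
    (h : ∀ i, φ (χ i) - X i ∈ idealOfVars (Fin m) K ^ 2) (k : ℕ) (p : MvPolynomial (Fin m) K) :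
    ∃ q, p - φ q ∈ idealOfVars (Fin m) K ^ k := by
  set M := idealOfVars (Fin m) K with hM
  set ψ := φ.comp (aeval χ) with hψ
  have hψX : ∀ i, ψ (X i) - X i ∈ M ^ 2 := fun i => by simpa [hψ] using h i
  have hψM1 : ∀ p, ψ p - p ∈ M := by
    intro p
    induction p using MvPolynomial.induction_on with
    | C a => simp [algHom_C]
    | add p q hp hq => 
      rw [map_add, add_sub_add_comm]; exact add_mem hp hq
    | mul_X p i hp =>
      have : ψ (p * X i) - p * X i = (ψ p - p) * ψ (X i) + p * (ψ (X i) - X i) := by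
        rw [map_mul]; ring
      rw [this]
      exact add_mem (Ideal.mul_mem_right _ _ hp) (Ideal.mul_mem_left _ _ (Ideal.pow_le_self two_ne_zero (hψX i)))
  have hψM : ∀ p ∈ M, ψ p ∈ M := fun p hp => by
    have := add_mem (hψM1 p) hp
    simpa using this
  have hψM2 : ∀ p ∈ M, ψ p - p ∈ M ^ 2 := by
    intro p hp
    refine Submodule.span_induction (p := fun p _ => ψ p - p ∈ M ^ 2) ?_ (by simp) ?_ ?_ hp
    · rintro _ ⟨i, rfl⟩; exact hψX i
    · intro a b _ _ ha hb; rw [map_add, add_sub_add_comm]; exact add_mem ha hb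
    · intro a x hx hxx
      have : ψ (a • x) - a • x = (ψ a - a) * ψ x + a * (ψ x - x) := by
        rw [smul_eq_mul, map_mul]; ring
      rw [this, pow_two]
      refine add_mem (Ideal.mul_mem_mul (hψM1 a) (hψM x hx)) (Ideal.mul_mem_left _ _ ?_)
      rwa [← pow_two]
  have hψk : ∀ k, ∀ p ∈ M ^ k, ψ p - p ∈ M ^ (k + 1) := by
    intro k
    induction k with
    | zero => intro p _; simpa using hψM1 p
    | succ k ih =>
      intro p hp
      rw [pow_succ] at hp
      refine Submodule.mul_induction_on hp ?_ ?_
      · intro a ha b hb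
        have : ψ (a * b) - a * b = (ψ a - a) * ψ b + a * (ψ b - b) := by
          rw [map_mul]; ring
        rw [this]
        refine add_mem ?_ ?_
        · rw [pow_succ]; exact Ideal.mul_mem_mul (ih a ha) (hψM b hb)
        · rw [show k + 1 + 1 = k + 2 by ring, pow_add]; exact Ideal.mul_mem_mul ha (hψM2 b hb)
      · intro a b ha hb; rw [map_add, add_sub_add_comm]; exact add_mem ha hb
  induction k with
  | zero => exact ⟨0, by simp⟩
  | succ k ih =>
    obtain ⟨q, hq⟩ := ih
    refine ⟨q + aeval χ (p - φ q), ?_⟩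
    have := hψk k _ hq
    have h2 : p - φ (q + aeval χ (p - φ q)) = -(ψ (p - φ q) - (p - φ q)) := by
      rw [hψ, map_add]; simp only [AlgHom.comp_apply]; ring
    rw [h2]; exact neg_mem this

theorem iso_of_map {Λ₁ Λ₂ : MvPolynomial (Fin m) K →ₗ[K] K}
    (φ : MvPolynomial (Fin m) K →ₐ[K] MvPolynomial (Fin m) K)
    (hs : ∀ p, ∃ q, p - φ q ∈ idealOfVars (Fin m) K ^ 4)
    (h2 : ∀ p ∈ idealOfVars (Fin m) K ^ 4, Λ₂ p = 0)
    (hI1 : II Λ₁ ≤ idealOfVars (Fin m) K)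
    (hI2 : II Λ₂ ≤ idealOfVars (Fin m) K)
    (hφ : ∀ p, φ p ∈ idealOfVars (Fin m) K ↔ p ∈ idealOfVars (Fin m) K)
    (c : K) (hc : c ≠ 0)
    (hΛ : ∀ p ∈ idealOfVars (Fin m) K, Λ₂ (φ p) = c * Λ₁ p) :
    Nonempty ((MvPolynomial (Fin m) K ⧸ II Λ₁) ≃ₐ[K] (MvPolynomial (Fin m) K ⧸ II Λ₂)) := by
  have key : ∀ p, p ∈ II Λ₁ ↔ φ p ∈ II Λ₂ := by
    intro p
    constructor
    · intro hp u
      obtain ⟨v, hv⟩ := hs u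
      have e : u * φ p = (u - φ v) * φ p + φ (v * p) := by rw [map_mul]; ring
      rw [e, map_add, h2 _ (Ideal.mul_mem_right _ _ hv), hΛ _ (Ideal.mul_mem_left _ _ (hI1 hp)), hp v]
      simp
    · intro hp u
      have hpM := (hφ p).1 (hI2 hp)
      have := hp (φ u)
      rw [← map_mul, hΛ _ (Ideal.mul_mem_left _ _ hpM)] at this
      exact (mul_eq_zero.1 this).resolve_left hc
  let g : MvPolynomial (Fin m) K →ₐ[K] MvPolynomial (Fin m) K ⧸ II Λ₂ := (Ideal.Quotient.mkₐ K (II Λ₂)).comp φ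
  have hg : Function.Surjective g := by
    intro y
    obtain ⟨p, rfl⟩ := Ideal.Quotient.mkₐ_surjective K (II Λ₂) y
    obtain ⟨q, hq⟩ := hs p
    refine ⟨q, ?_⟩
    symm
    refine (Ideal.Quotient.eq (I := II Λ₂)).2 ?_
    intro u
    exact h2 _ (Ideal.mul_mem_left _ _ hq)
  have hk : RingHom.ker g = II Λ₁ := by
    ext p
    rw [key]
    exact Ideal.Quotient.eq_zero_iff_mem
  exact ⟨(Ideal.quotientEquivAlgOfEq K hk.symm).trans (Ideal.quotientKerAlgEquivOfSurjective hg)⟩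





structure Good (Λ : MvPolynomial (Fin m) K →ₗ[K] K) : Prop where
  kill : ∀ p ∈ idealOfVars (Fin m) K ^ 4, Λ p = 0
  top : ∃ s ∈ idealOfVars (Fin m) K ^ 3, Λ s = 1

theorem sub_const_mem (p : MvPolynomial (Fin m) K) :
    p - C (constantCoeff p) ∈ idealOfVars (Fin m) K := by
  rw [mem_M_iff]; simp

theorem map_C_mul' (Λ : MvPolynomial (Fin m) K →ₗ[K] K) (c : K) (p) : Λ (C c * p) = c * Λ p := by
  rw [← smul_eq_C_mul, map_smul, smul_eq_mul]

theorem sub_lf_mem {p : MvPolynomial (Fin m) K} (hp : p ∈ idealOfVars (Fin m) K) :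
    p - lf (lin p) ∈ idealOfVars (Fin m) K ^ 2 := by
  have := sub_lin_mem p
  rw [(mem_M_iff p).1 hp] at this
  simpa using this

theorem lin_of_mem {p : MvPolynomial (Fin m) K} (hp : p ∈ idealOfVars (Fin m) K ^ 2) :
    lin p = 0 := by
  rw [mem_pow_idealOfVars_iff'] at hp
  ext i
  exact hp _ (by simp)

theorem lin_lf (v : Fin m → K) : lin (lf v) = v := by
  have : (lin ∘ₗ lf : (Fin m → K) →ₗ[K] _) = LinearMap.id := by
    refine LinearMap.pi_ext' fun i => LinearMap.ext_ring ?_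
    simp only [LinearMap.comp_apply, LinearMap.single_apply, LinearMap.id_apply]
    rw [lf_single]
    ext j
    simp only [lin, LinearMap.pi_apply, lcoeff_apply, coeff_X, Finsupp.single_left_inj one_ne_zero,
      Pi.single_apply, eq_comm]
  exact LinearMap.congr_fun this v

theorem mul_mem_add {p q : MvPolynomial (Fin m) K} {a b c : ℕ}
    (hp : p ∈ idealOfVars (Fin m) K ^ a) (hq : q ∈ idealOfVars (Fin m) K ^ b) (h : c ≤ a + b) :
    p * q ∈ idealOfVars (Fin m) K ^ c :=
  Ideal.pow_le_pow_right h (by rw [pow_add]; exact Ideal.mul_mem_mul hp hq)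

theorem lf_mem1 (v : Fin m → K) : lf v ∈ idealOfVars (Fin m) K ^ 1 := by
  rw [pow_one]; exact lf_mem v

theorem prod3_sub {a b c a' b' c' : MvPolynomial (Fin m) K}
    (ha : a ∈ idealOfVars (Fin m) K)
    (hb : b ∈ idealOfVars (Fin m) K) (hb' : b' ∈ idealOfVars (Fin m) K)
    (hc : c ∈ idealOfVars (Fin m) K) (hc' : c' ∈ idealOfVars (Fin m) K)
    (haa : a - a' ∈ idealOfVars (Fin m) K ^ 2)
    (hbb : b - b' ∈ idealOfVars (Fin m) K ^ 2)
    (hcc : c - c' ∈ idealOfVars (Fin m) K ^ 2) :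
    a * b * c - a' * b' * c' ∈ idealOfVars (Fin m) K ^ 4 := by
  rw [← pow_one (idealOfVars (Fin m) K)] at ha hb hb' hc hc'
  have e : a * b * c - a' * b' * c' = (a * b) * (c - c') + (a * c') * (b - b') + (b' * c') * (a - a') := by
    ring
  rw [e]
  refine add_mem (add_mem ?_ ?_) ?_
  · exact mul_mem_add (mul_mem_add ha hb le_rfl) hcc le_rfl
  · exact mul_mem_add (mul_mem_add ha hc' le_rfl) hbb le_rfl
  · exact mul_mem_add (mul_mem_add hb' hc' le_rfl) haa le_rfl

theorem II_le {Λ : MvPolynomial (Fin m) K →ₗ[K] K} (h : Good Λ) : II Λ ≤ idealOfVars (Fin m) K := by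
  intro p hp
  obtain ⟨s, hs, hs1⟩ := h.top
  have h1 := hp s
  have h2 : Λ (s * (p - C (constantCoeff p))) = 0 :=
    h.kill _ (mul_mem_add (b := 1) hs (by rw [pow_one]; exact sub_const_mem p) le_rfl)
  rw [mul_sub, map_sub, h1, mul_comm s (C _), map_C_mul', hs1] at h2
  rw [mem_M_iff]
  simpa using h2

theorem mem_II_of_M4 {Λ : MvPolynomial (Fin m) K →ₗ[K] K} (h : Good Λ) {p}
    (hp : p ∈ idealOfVars (Fin m) K ^ 4) : p ∈ II Λ :=
  fun u => h.kill _ (Ideal.mul_mem_left _ _ hp)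

theorem mem_II_of_M3 {Λ : MvPolynomial (Fin m) K →ₗ[K] K} (h : Good Λ) {p}
    (hp : p ∈ idealOfVars (Fin m) K ^ 3) (h0 : Λ p = 0) : p ∈ II Λ := by
  intro u
  have h2 : Λ ((u - C (constantCoeff u)) * p) = 0 :=
    h.kill _ (mul_mem_add (a := 1) (by rw [pow_one]; exact sub_const_mem u) hp le_rfl)
  rw [sub_mul, map_sub, map_C_mul', h0] at h2
  simpa using h2

theorem monomial_cases (d : Fin m →₀ ℕ) : (monomial d (1 : K)) = 1 ∨
    ∃ i d', monomial d (1 : K) = X i * monomial d' 1 := by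
  by_cases hd : d = 0
  · left; subst hd; rfl
  · right
    obtain ⟨i, hi⟩ : ∃ i, d i ≠ 0 := by
      by_contra! h
      exact hd (Finsupp.ext h)
    refine ⟨i, d - Finsupp.single i 1, ?_⟩
    have hle : Finsupp.single i 1 ≤ d := by
      rw [Finsupp.single_le_iff]; omega
    rw [X, monomial_mul, one_mul, add_tsub_cancel_of_le hle]

theorem ext3 (Θ : MvPolynomial (Fin m) K →ₗ[K] K)
    (h1 : ∀ i, Θ (X i) = 0) (h2 : ∀ i j, Θ (X i * X j) = 0)
    (h3 : ∀ i j k, Θ (X i * X j * X k) = 0) (h4 : ∀ p ∈ idealOfVars (Fin m) K ^ 4, Θ p = 0)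
    (p) (hp : p ∈ idealOfVars (Fin m) K) : Θ p = 0 := by
  have hm : ∀ d : Fin m →₀ ℕ, d ≠ 0 → Θ (monomial d 1) = 0 := by
    intro d hd
    rcases monomial_cases (K := K) d with h | ⟨i, d, h⟩
    · exact absurd (monomial_left_injective (R := K) (one_ne_zero) (h : monomial d (1 : K) = monomial 0 (1 : K))) hd
    rw [h]
    rcases monomial_cases (K := K) d with h | ⟨j, d, h⟩
    · rw [h, mul_one, h1]
    rw [h]
    rcases monomial_cases (K := K) d with h | ⟨k, d, h⟩
    · rw [h, mul_one, h2]
    rw [h]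
    rcases monomial_cases (K := K) d with h | ⟨l, d, h⟩
    · rw [h, mul_one, ← mul_assoc, h3]
    rw [h]
    apply h4
    have : (X i * (X j * (X k * (X l * monomial d 1))) : MvPolynomial (Fin m) K) =
      monomial d 1 * (X i * X j * X k * X l) := by ring
    rw [this]
    refine Ideal.mul_mem_left _ _ ?_
    have hX : ∀ i : Fin m, (X i : MvPolynomial (Fin m) K) ∈ idealOfVars (Fin m) K ^ 1 := fun i => by
      rw [pow_one]; exact X_mem i
    exact mul_mem_add (mul_mem_add (mul_mem_add (hX i) (hX j) le_rfl) (hX k) le_rfl) (hX l) le_rfl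
  rw [p.as_sum, map_sum]
  refine Finset.sum_eq_zero fun d hd => ?_
  have : monomial d (coeff d p) = (coeff d p) • monomial d (1 : K) := by
    rw [smul_monomial, smul_eq_mul, mul_one]
  rw [this, map_smul]
  by_cases hd0 : d = 0
  · subst hd0
    have : coeff 0 p = 0 := (mem_M_iff p).1 hp
    rw [this, zero_smul]
  · rw [hm d hd0, smul_zero]

theorem exists_L {Λ₁ Λ₂ : MvPolynomial (Fin m) K →ₗ[K] K} (g1 : Good Λ₁) (g2 : Good Λ₂)
    (Ψ : (MvPolynomial (Fin m) K ⧸ II Λ₁) ≃ₐ[K] (MvPolynomial (Fin m) K ⧸ II Λ₂)) :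
    ∃ (L : (Fin m → K) →ₗ[K] (Fin m → K)) (c : K), c ≠ 0 ∧
      ∀ u v w, Λ₂ (lf (L u) * lf (L v) * lf (L w)) = c * Λ₁ (lf u * lf v * lf w) := by
  choose ψ hψ using fun i => Ideal.Quotient.mk_surjective (I := II Λ₂) (Ψ (Ideal.Quotient.mk _ (X i)))
  set φ : MvPolynomial (Fin m) K →ₐ[K] MvPolynomial (Fin m) K := aeval ψ with hφ
  have hcomm : ∀ p, Ideal.Quotient.mk (II Λ₂) (φ p) = Ψ (Ideal.Quotient.mk (II Λ₁) p) := by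
    have : (Ideal.Quotient.mkₐ K (II Λ₂)).comp φ = (Ψ : _ →ₐ[K] _).comp (Ideal.Quotient.mkₐ K (II Λ₁)) := by
      apply MvPolynomial.algHom_ext
      intro i
      simpa [hφ] using hψ i
    intro p
    exact DFunLike.congr_fun this p
  have hmem : ∀ p, φ p ∈ II Λ₂ ↔ p ∈ II Λ₁ := by
    intro p
    rw [← Ideal.Quotient.eq_zero_iff_mem, hcomm, EmbeddingLike.map_eq_zero_iff,
      Ideal.Quotient.eq_zero_iff_mem]
  have hψM : ∀ i, ψ i ∈ idealOfVars (Fin m) K := by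
    intro i
    have h1 : (X i : MvPolynomial (Fin m) K) ^ 4 ∈ II Λ₁ :=
      mem_II_of_M4 g1 (Ideal.pow_mem_pow (X_mem i) 4)
    have h2 := II_le g2 ((hmem _).2 h1)
    rw [mem_M_iff] at h2 ⊢
    simpa [hφ] using h2
  have hφM : (idealOfVars (Fin m) K).map φ ≤ idealOfVars (Fin m) K := by
    rw [idealOfVars, Ideal.map_span, Ideal.span_le]
    rintro _ ⟨_, ⟨i, rfl⟩, rfl⟩
    simpa [hφ] using hψM i
  have hφM' : ∀ k, ∀ p ∈ idealOfVars (Fin m) K ^ k, φ p ∈ idealOfVars (Fin m) K ^ k := by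
    intro k p hp
    have := Ideal.mem_map_of_mem φ hp
    rw [Ideal.map_pow] at this
    exact Ideal.pow_right_mono hφM k this
  let L : (Fin m → K) →ₗ[K] (Fin m → K) := lin ∘ₗ φ.toLinearMap ∘ₗ lf
  have hl : ∀ v, φ (lf v) ∈ idealOfVars (Fin m) K := fun v => by
    simpa using hφM' 1 _ (lf_mem1 v)
  have hL : ∀ v, φ (lf v) - lf (L v) ∈ idealOfVars (Fin m) K ^ 2 := fun v => sub_lf_mem (hl v)
  obtain ⟨s, hs, hs1⟩ := g1.top
  refine ⟨L, Λ₂ (φ s), ?_, ?_⟩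
  · intro h0
    have := (hmem s).1 (mem_II_of_M3 g2 (hφM' _ _ hs) h0) 1
    rw [one_mul, hs1] at this
    exact one_ne_zero this
  · intro u v w
    have hz : lf u * lf v * lf w - Λ₁ (lf u * lf v * lf w) • s ∈ II Λ₁ := by
      apply mem_II_of_M3 g1
      · refine sub_mem (mul_mem_add (mul_mem_add (lf_mem1 u) (lf_mem1 v) le_rfl) (lf_mem1 w) le_rfl) ?_
        rw [smul_eq_C_mul]; exact Ideal.mul_mem_left _ _ hs
      · rw [map_sub, map_smul, hs1]; simp
    have h1 := (hmem _).2 hz 1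
    rw [one_mul, map_sub, map_smul, map_sub, map_smul, map_mul φ, map_mul φ] at h1
    have h2 := g2.kill _ (prod3_sub (hl u) (hl v) (lf_mem _) (hl w) (lf_mem _) (hL u) (hL v) (hL w))
    rw [map_sub] at h2
    rw [smul_eq_mul] at h1
    linear_combination h1 - h2

/-- radical of the cubic form -/
def WW (Λ : MvPolynomial (Fin m) K →ₗ[K] K) : Submodule K (Fin m → K) where
  carrier := {w | ∀ u v, Λ (lf w * lf u * lf v) = 0}
  zero_mem' := fun u v => by simp
  add_mem' := fun {a b} ha hb u v => by
    rw [map_add, add_mul, add_mul, map_add, ha u v, hb u v, add_zero]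
  smul_mem' := fun c f hf u v => by
    rw [map_smul, smul_mul_assoc, smul_mul_assoc, map_smul, hf u v, smul_zero]

theorem finrank_le {Λ₁ Λ₂ : MvPolynomial (Fin m) K →ₗ[K] K}
    (L : (Fin m → K) →ₗ[K] (Fin m → K)) (c : K) (hc : c ≠ 0)
    (hL : ∀ u v w, Λ₂ (lf (L u) * lf (L v) * lf (L w)) = c * Λ₁ (lf u * lf v * lf w)) :
    Module.finrank K (WW Λ₂) ≤ Module.finrank K (WW Λ₁) := by
  have hk : LinearMap.ker ((WW Λ₂).mkQ ∘ₗ L) ≤ WW Λ₁ := by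
    intro w hw u v
    rw [LinearMap.mem_ker, LinearMap.comp_apply, Submodule.mkQ_apply, Submodule.Quotient.mk_eq_zero] at hw
    have := hw (L u) (L v)
    rw [hL] at this
    exact (mul_eq_zero.1 this).resolve_left hc
  have h1 := LinearMap.finrank_range_add_finrank_ker ((WW Λ₂).mkQ ∘ₗ L)
  have h2 := Submodule.finrank_mono hk
  have h3 := Submodule.finrank_le (LinearMap.range ((WW Λ₂).mkQ ∘ₗ L))
  have h4 := Submodule.finrank_quotient_add_finrank (WW Λ₂)
  omega

theorem T_congr {Λ : MvPolynomial (Fin m) K →ₗ[K] K} {a b c a' b' c' : Fin m → K}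
    (ha : a - a' ∈ WW Λ) (hb : b - b' ∈ WW Λ) (hc : c - c' ∈ WW Λ) :
    Λ (lf a * lf b * lf c) = Λ (lf a' * lf b' * lf c') := by
  have h1 := ha b c
  have h2 := hb a' c
  have h3 := hc a' b'
  rw [← sub_eq_zero, ← map_sub]
  have : lf a * lf b * lf c - lf a' * lf b' * lf c' = lf (a - a') * lf b * lf c +
    lf (b - b') * lf a' * lf c + lf (c - c') * lf a' * lf b' := by
    simp only [map_sub]; ring
  rw [this, map_add, map_add, h1, h2, h3]; simp

theorem exists_equiv {Λ₁ Λ₂ : MvPolynomial (Fin m) K →ₗ[K] K}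
    (L : (Fin m → K) →ₗ[K] (Fin m → K)) (c : K) (hc : c ≠ 0)
    (hL : ∀ u v w, Λ₂ (lf (L u) * lf (L v) * lf (L w)) = c * Λ₁ (lf u * lf v * lf w))
    (E : WW Λ₁ ≃ₗ[K] WW Λ₂) :
    ∃ L' : (Fin m → K) ≃ₗ[K] (Fin m → K), (∀ w : WW Λ₁, L' w = E w) ∧
    (∀ u v w, Λ₂ (lf (L' u) * lf (L' v) * lf (L' w)) = c * Λ₁ (lf u * lf v * lf w)) := by
  obtain ⟨U, hU⟩ := Submodule.exists_isCompl (WW Λ₁)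
  let L0 : (Fin m → K) →ₗ[K] (Fin m → K) :=
    LinearMap.ofIsCompl hU ((WW Λ₂).subtype ∘ₗ (E : WW Λ₁ →ₗ[K] WW Λ₂)) (L ∘ₗ U.subtype)
  have hW : ∀ w : WW Λ₁, L0 w = E w := fun w => by
    simp [L0, LinearMap.ofIsCompl_apply_left hU]
  have hUU : ∀ w : U, L0 w = L w := fun w => by
    simp [L0, LinearMap.ofIsCompl_apply_right hU]
  have hdec : ∀ x : Fin m → K, ∃ (w : WW Λ₁) (u : U), x = w + u := by
    intro x
    have : x ∈ WW Λ₁ ⊔ U := by rw [hU.sup_eq_top]; trivial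
    obtain ⟨w, hw, u, hu, rfl⟩ := Submodule.mem_sup.1 this
    exact ⟨⟨w, hw⟩, ⟨u, hu⟩, rfl⟩
  have hinj : Function.Injective L0 := by
    rw [injective_iff_map_eq_zero]
    intro x hx
    obtain ⟨w, u, rfl⟩ := hdec x
    rw [map_add, hW, hUU] at hx
    have hu : L u ∈ WW Λ₂ := by
      have : L u = - (E w : Fin m → K) := by rw [eq_neg_iff_add_eq_zero, add_comm]; exact hx
      rw [this]; exact neg_mem (E w).2
    have hu1 : (u : Fin m → K) ∈ WW Λ₁ := by
      intro a b
      have := hu (L a) (L b)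
      rw [hL] at this
      exact (mul_eq_zero.1 this).resolve_left hc
    have hu0 : (u : Fin m → K) = 0 := by
      have := hU.disjoint.le_bot (Submodule.mem_inf.2 ⟨hu1, u.2⟩)
      simpa using this
    rw [hu0, map_zero, add_zero] at hx
    have : E w = 0 := Subtype.ext hx
    rw [EmbeddingLike.map_eq_zero_iff] at this
    rw [this, hu0]; simp
  refine ⟨LinearEquiv.ofInjectiveEndo L0 hinj, fun w => hW w, ?_⟩
  intro x y z
  change Λ₂ (lf (L0 x) * lf (L0 y) * lf (L0 z)) = _
  obtain ⟨w, u, rfl⟩ := hdec x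
  obtain ⟨w', u', rfl⟩ := hdec y
  obtain ⟨w'', u'', rfl⟩ := hdec z
  have h2 : ∀ (w : WW Λ₁) (u : U), L0 (w + u) - L u ∈ WW Λ₂ := fun w u => by
    rw [map_add, hW, hUU]; simp
  have h1 : ∀ (w : WW Λ₁) (u : U), (w + u : Fin m → K) - u ∈ WW Λ₁ := fun w u => by simp
  rw [T_congr (h2 w u) (h2 w' u') (h2 w'' u''), T_congr (h1 w u) (h1 w' u') (h1 w'' u''), hL]

theorem exists_quad {Λ : MvPolynomial (Fin m) K →ₗ[K] K} (θ : Module.Dual K (Fin m → K))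
    (hθ : ∀ w ∈ WW Λ, θ w = 0) :
    ∃ f ∈ idealOfVars (Fin m) K ^ 2, ∀ v, Λ (f * lf v) = θ v := by
  let J : MvPolynomial (Fin m) K →ₗ[K] Module.Dual K (Fin m → K) :=
    ((LinearMap.mul K (MvPolynomial (Fin m) K)).compr₂ Λ).compl₂ lf
  have hJ : ∀ f v, J f v = Λ (f * lf v) := fun f v => rfl
  let Φ : Subspace K (Module.Dual K (Fin m → K)) :=
    Submodule.map J ((idealOfVars (Fin m) K ^ 2).restrictScalars K)
  have h : θ ∈ Φ.dualCoannihilator.dualAnnihilator := by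
    rw [Submodule.mem_dualAnnihilator]
    intro w hw
    rw [Submodule.mem_dualCoannihilator] at hw
    apply hθ
    intro u v
    have := hw (J (lf u * lf v)) ⟨_, mul_mem_add (lf_mem1 u) (lf_mem1 v) le_rfl, rfl⟩
    rw [hJ] at this
    rw [← this]; congr 1; ring
  rw [Subspace.dualCoannihilator_dualAnnihilator_eq] at h
  obtain ⟨f, hf, rfl⟩ := h
  exact ⟨f, hf, fun v => rfl⟩

theorem kill_W {Λ : MvPolynomial (Fin m) K →ₗ[K] K} (g : Good Λ) {w} (hw : w ∈ WW Λ)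
    {r} (hr : r ∈ idealOfVars (Fin m) K ^ 2) : Λ (r * lf w) = 0 := by
  rw [pow_two] at hr
  refine Submodule.mul_induction_on hr ?_ ?_
  · intro a ha b hb
    have := g.kill _ (prod3_sub ha hb (lf_mem _) (lf_mem w) (lf_mem w) (sub_lf_mem ha) (sub_lf_mem hb) (by simp))
    rw [map_sub, sub_eq_zero] at this
    rw [this, ← hw (lin a) (lin b)]; congr 1; ring
  · intro a b ha hb; rw [add_mul, map_add, ha, hb, add_zero]

theorem nondeg {Λ : MvPolynomial (Fin m) K →ₗ[K] K} (g : Good Λ) (hlin : ∀ p ∈ II Λ, lin p = 0)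
    {w} (hw : w ∈ WW Λ) (h : ∀ w' ∈ WW Λ, Λ (lf w * lf w') = 0) : w = 0 := by
  obtain ⟨f, hf, hfv⟩ := exists_quad (Λ := Λ) (Λ ∘ₗ LinearMap.mulLeft K (lf w) ∘ₗ lf) h
  obtain ⟨s, hs, hs1⟩ := g.top
  set p := lf w - f - Λ (lf w - f) • s with hp
  have hsM : ∀ t : K, t • s ∈ idealOfVars (Fin m) K ^ 3 := fun t => by
    rw [smul_eq_C_mul]; exact Ideal.mul_mem_left _ _ hs
  have hpI : p ∈ II Λ := by
    intro u
    have e : u = C (constantCoeff u) + lf (lin u) + (u - C (constantCoeff u) - lf (lin u)) := by ring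
    have hr := sub_lin_mem u
    set r := u - C (constantCoeff u) - lf (lin u)
    rw [e, add_mul, add_mul, map_add, map_add, map_C_mul']
    have h1 : Λ p = 0 := by rw [hp, map_sub, map_smul, hs1]; simp
    have h2 : Λ (lf (lin u) * p) = 0 := by
      have e1 := hfv (lin u)
      simp only [LinearMap.comp_apply, LinearMap.mulLeft_apply] at e1
      have e2 := g.kill _ (mul_mem_add (lf_mem1 (lin u)) (hsM (Λ (lf w - f))) le_rfl)
      rw [hp, mul_sub, map_sub, e2, mul_sub, map_sub, mul_comm _ f, e1, mul_comm (lf w)]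
      simp
    have h3 : Λ (r * p) = 0 := by
      have e2 := g.kill _ (mul_mem_add hr (hsM (Λ (lf w - f))) (by norm_num : 4 ≤ 2 + 3))
      rw [hp, mul_sub, map_sub, e2, mul_sub, map_sub, kill_W g hw hr, g.kill _ (mul_mem_add hr hf le_rfl)]
      simp
    rw [h1, h2, h3]; simp
  have := hlin p hpI
  rw [hp, map_sub, map_sub, lin_lf, lin_of_mem hf, lin_of_mem (Ideal.pow_le_pow_right (by norm_num) (hsM _))] at this
  simpa using this





theorem exists_isometry [IsAlgClosed K] [CharZero K] {M N : Type*} [AddCommGroup M] [Module K M]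
    [FiniteDimensional K M] [AddCommGroup N] [Module K N] [FiniteDimensional K N]
    (h : Module.finrank K M = Module.finrank K N)
    (B : LinearMap.BilinForm K M) (B' : LinearMap.BilinForm K N)
    (hs : ∀ x y, B x y = B y x) (hs' : ∀ x y, B' x y = B' y x)
    (hn : ∀ x, (∀ y, B x y = 0) → x = 0) (hn' : ∀ x, (∀ y, B' x y = 0) → x = 0) :
    ∃ E : M ≃ₗ[K] N, ∀ x y, B' (E x) (E y) = B x y := by
  haveI : Invertible (2 : K) := invertibleOfNonzero two_ne_zero
  obtain ⟨e⟩ := FiniteDimensional.nonempty_linearEquiv_of_finrank_eq h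
  let B2 : LinearMap.BilinForm K M := B'.compl₁₂ (e : M →ₗ[K] N) (e : M →ₗ[K] N)
  have hB2 : ∀ x y, B2 x y = B' (e x) (e y) := fun x y => rfl
  have a1 : QuadraticMap.associated (R := K) (LinearMap.BilinMap.toQuadraticMap B) = B :=
    QuadraticMap.associated_left_inverse K hs
  have a2 : QuadraticMap.associated (R := K) (LinearMap.BilinMap.toQuadraticMap B2) = B2 :=
    QuadraticMap.associated_left_inverse K (fun x y => hs' _ _)
  obtain ⟨f⟩ := QuadraticForm.equivalent_of_isAlgClosed (LinearMap.BilinMap.toQuadraticMap B)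
    (LinearMap.BilinMap.toQuadraticMap B2) (by rw [a1]; exact hn) (by
      rw [a2]
      intro x hx
      have := hn' (e x) (fun y => by
        have := hx (e.symm y)
        rw [hB2, e.apply_symm_apply] at this
        exact this)
      simpa using this)
  refine ⟨f.toLinearEquiv.trans e, fun x y => ?_⟩
  have hq : ∀ z, B2 (f z) (f z) = B z z := fun z => f.map_app z
  have h1 := hq (x + y)
  have h2 := hq x
  have h3 := hq y
  have hsB2 : B2 (f y) (f x) = B2 (f x) (f y) := hs' _ _
  have hadd : f (x + y) = f x + f y := map_add f.toLinearEquiv x y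
  rw [hadd] at h1
  simp only [map_add, LinearMap.add_apply] at h1
  rw [hs y x, hsB2, h2, h3] at h1
  have : B2 (f x) (f y) = B x y := by
    have h2' : (2 : K) * B2 (f x) (f y) = 2 * B x y := by linear_combination h1
    exact mul_left_cancel₀ two_ne_zero h2'
  exact this

theorem exists_B [CharZero K] (Λ₁ Λ₂ : MvPolynomial (Fin m) K →ₗ[K] K)
    (L : (Fin m → K) ≃ₗ[K] (Fin m → K)) (c : K)
    (hq : ∀ u ∈ WW Λ₁, ∀ v ∈ WW Λ₁, Λ₂ (lf (L u) * lf (L v)) = c * Λ₁ (lf u * lf v)) :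
    ∃ B : (Fin m → K) → (Fin m → K) →ₗ[K] K, (∀ u, ∀ v ∈ WW Λ₁, B u v = 0) ∧
      (∀ u v, B u v + B v u = c * Λ₁ (lf u * lf v) - Λ₂ (lf (L u) * lf (L v))) := by
  obtain ⟨U, hU⟩ := Submodule.exists_isCompl (WW Λ₁)
  -- the projection to U along W
  let p : (Fin m → K) →ₗ[K] (Fin m → K) :=
    LinearMap.ofIsCompl hU (0 : WW Λ₁ →ₗ[K] (Fin m → K)) U.subtype
  have hpW : ∀ w ∈ WW Λ₁, p w = 0 := fun w hw => by
    simpa using LinearMap.ofIsCompl_apply_left hU (φ := (0 : WW Λ₁ →ₗ[K] (Fin m → K))) (ψ := U.subtype) ⟨w, hw⟩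
  have hpU : ∀ w ∈ U, p w = w := fun w hw => by
    simpa using LinearMap.ofIsCompl_apply_right hU (φ := (0 : WW Λ₁ →ₗ[K] (Fin m → K))) (ψ := U.subtype) ⟨w, hw⟩
  have hp1 : ∀ x, x - p x ∈ WW Λ₁ := by
    intro x
    have : x ∈ WW Λ₁ ⊔ U := by rw [hU.sup_eq_top]; trivial
    obtain ⟨w, hw, u, hu, rfl⟩ := Submodule.mem_sup.1 this
    rw [map_add, hpW w hw, hpU u hu]; simpa using hw
  let d1 : (Fin m → K) →ₗ[K] (Fin m → K) →ₗ[K] K :=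
    ((LinearMap.mul K (MvPolynomial (Fin m) K)).compr₂ Λ₁).compl₁₂ lf lf
  let d2 : (Fin m → K) →ₗ[K] (Fin m → K) →ₗ[K] K :=
    ((LinearMap.mul K (MvPolynomial (Fin m) K)).compr₂ Λ₂).compl₁₂ (lf ∘ₗ (L : _ →ₗ[K] _)) (lf ∘ₗ (L : _ →ₗ[K] _))
  let d : (Fin m → K) →ₗ[K] (Fin m → K) →ₗ[K] K := c • d1 - d2
  have hd : ∀ u v, d u v = c * Λ₁ (lf u * lf v) - Λ₂ (lf (L u) * lf (L v)) := fun u v => rfl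
  have hds : ∀ u v, d u v = d v u := fun u v => by
    rw [hd, hd, mul_comm (lf u), mul_comm (lf (L u))]
  have hdW : ∀ u ∈ WW Λ₁, ∀ v ∈ WW Λ₁, d u v = 0 := fun u hu v hv => by
    rw [hd, hq u hu v hv, sub_self]
  let B : (Fin m → K) → (Fin m → K) →ₗ[K] K := fun u =>
    (d (u - p u) + (2⁻¹ : K) • d (p u)) ∘ₗ p
  have hB : ∀ u v, B u v = d (u - p u) (p v) + 2⁻¹ * d (p u) (p v) := fun u v => rfl
  have hBW : ∀ u, ∀ v ∈ WW Λ₁, B u v = 0 := fun u v hv => by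
    rw [hB, hpW v hv]; simp
  have hBB : ∀ u v, B u v + B v u = d u v := by
    intro u v
    have h := hdW _ (hp1 u) _ (hp1 v)
    rw [hB, hB, hds (p v) (p u)]
    simp only [map_sub, LinearMap.sub_apply] at h ⊢
    rw [hds v (p u), hds (p v) (p u)]
    have h2 : (2⁻¹ : K) + 2⁻¹ = 1 := by norm_num
    linear_combination -h + d (p u) (p v) * h2
  exact ⟨B, hBW, fun u v => (hBB u v).trans (hd u v)⟩

set_option maxHeartbeats 1000000 in
theorem main_iso [CharZero K] {Λ₁ Λ₂ : MvPolynomial (Fin m) K →ₗ[K] K} (g1 : Good Λ₁) (g2 : Good Λ₂)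
    (L : (Fin m → K) ≃ₗ[K] (Fin m → K)) (c : K) (hc : c ≠ 0)
    (hT : ∀ u v w, Λ₂ (lf (L u) * lf (L v) * lf (L w)) = c * Λ₁ (lf u * lf v * lf w))
    (hq : ∀ u ∈ WW Λ₁, ∀ v ∈ WW Λ₁, Λ₂ (lf (L u) * lf (L v)) = c * Λ₁ (lf u * lf v)) :
    Nonempty ((MvPolynomial (Fin m) K ⧸ II Λ₁) ≃ₐ[K] (MvPolynomial (Fin m) K ⧸ II Λ₂)) := by
  obtain ⟨B, hBW, hBB⟩ := exists_B Λ₁ Λ₂ L c hq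
  have hex : ∀ i : Fin m, ∃ f ∈ idealOfVars (Fin m) K ^ 2, ∀ v, Λ₂ (f * lf (L v)) = B (Pi.single i 1) v := by
    intro i
    obtain ⟨f, hf, hfv⟩ := exists_quad (Λ := Λ₂) ((B (Pi.single i 1)) ∘ₗ (L.symm : _ →ₗ[K] _)) (by
      intro w hw
      refine hBW _ _ ?_
      intro u v
      have := hT (L.symm w) u v
      rw [L.apply_symm_apply, hw] at this
      exact (mul_eq_zero.1 this.symm).resolve_left hc)
    refine ⟨f, hf, fun v => ?_⟩
    rw [hfv]; simp
  choose f hf hfv using hex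
  obtain ⟨s, hs, hs1⟩ := g2.top
  have hsM : ∀ t : K, t • s ∈ idealOfVars (Fin m) K ^ 3 := fun t => by
    rw [smul_eq_C_mul]; exact Ideal.mul_mem_left _ _ hs
  let t : Fin m → K := fun i => c * Λ₁ (X i) - Λ₂ (lf (L (Pi.single i 1))) - Λ₂ (f i)
  let φ : MvPolynomial (Fin m) K →ₐ[K] MvPolynomial (Fin m) K :=
    aeval (fun i => lf (L (Pi.single i 1)) + f i + t i • s)
  have hφX : ∀ i, φ (X i) = lf (L (Pi.single i 1)) + f i + t i • s := fun i => by simp [φ]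
  have hφX2 : ∀ i, φ (X i) - lf (L (Pi.single i 1)) ∈ idealOfVars (Fin m) K ^ 2 := fun i => by
    have : φ (X i) - lf (L (Pi.single i 1)) = f i + t i • s := by rw [hφX]; ring
    rw [this]
    exact add_mem (hf i) (Ideal.pow_le_pow_right (by norm_num) (hsM (t i)))
  have hφX1 : ∀ i, φ (X i) ∈ idealOfVars (Fin m) K := fun i => by
    have := add_mem (Ideal.pow_le_self two_ne_zero (hφX2 i)) (lf_mem (L (Pi.single i 1)))
    simpa using this
  have hφM : (idealOfVars (Fin m) K).map φ ≤ idealOfVars (Fin m) K := by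
    rw [idealOfVars, Ideal.map_span, Ideal.span_le]
    rintro _ ⟨_, ⟨i, rfl⟩, rfl⟩
    exact hφX1 i
  have hφM' : ∀ k, ∀ p ∈ idealOfVars (Fin m) K ^ k, φ p ∈ idealOfVars (Fin m) K ^ k := by
    intro k p hp
    have := Ideal.mem_map_of_mem φ hp
    rw [Ideal.map_pow] at this
    exact Ideal.pow_right_mono hφM k this
  have hφl : ∀ v, φ (lf v) - lf (L v) ∈ idealOfVars (Fin m) K ^ 2 := by
    intro v
    have e : φ (lf v) - lf (L v) = ∑ i, v i • (φ (X i) - lf (L (Pi.single i 1))) := by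
      have hv : v = ∑ i, v i • (Pi.single i (1 : K) : Fin m → K) := (pi_eq_sum_univ' v).trans (by
        refine Finset.sum_congr rfl fun i _ => ?_
        congr 1)
      simp only [smul_sub, Finset.sum_sub_distrib]
      congr 1
      · rw [lf_apply, map_sum]; simp only [map_smul]
      · conv_lhs => rw [hv]
        simp only [map_sum, map_smul]
    rw [e]
    refine Ideal.sum_mem _ fun i _ => ?_
    rw [smul_eq_C_mul]; exact Ideal.mul_mem_left _ _ (hφX2 i)
  refine iso_of_map φ (exists_surj_mod φ (fun i => lf (L.symm (Pi.single i 1))) (fun i => ?_) 4) g2.kill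
    (II_le g1) (II_le g2) (fun p => ?_) c hc ?_
  · have := hφl (L.symm (Pi.single i 1))
    rwa [L.apply_symm_apply, lf_single] at this
  · have h1 : φ (p - C (constantCoeff p)) ∈ idealOfVars (Fin m) K := by
      have h0 := hφM' 1 (p - C (constantCoeff p)) (by rw [pow_one]; exact sub_const_mem p)
      rwa [pow_one] at h0
    rw [map_sub, algHom_C] at h1
    constructor
    · intro h
      have h2 := sub_mem h h1
      rw [sub_sub_cancel] at h2
      simpa using add_mem (sub_const_mem p) h2
    · intro h
      rw [(mem_M_iff p).1 h] at h1
      simpa using h1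
  · intro q hq
    have := ext3 (Λ₂ ∘ₗ φ.toLinearMap - c • Λ₁) ?_ ?_ ?_ ?_ q hq
    · simpa [sub_eq_zero] using this
    · intro i
      simp only [LinearMap.sub_apply, LinearMap.comp_apply, LinearMap.smul_apply, AlgHom.toLinearMap_apply, smul_eq_mul]
      rw [hφX, map_add, map_add, map_smul, hs1]
      simp only [t, smul_eq_mul]; ring
    · intro i j
      simp only [LinearMap.sub_apply, LinearMap.comp_apply, LinearMap.smul_apply, AlgHom.toLinearMap_apply, smul_eq_mul]
      have e : φ (X i * X j) = lf (L (Pi.single i 1)) * lf (L (Pi.single j 1)) +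
        f i * lf (L (Pi.single j 1)) + f j * lf (L (Pi.single i 1)) +
        ((t i • s) * lf (L (Pi.single j 1)) + (t j • s) * lf (L (Pi.single i 1)) +
          (φ (X i) - lf (L (Pi.single i 1))) * (φ (X j) - lf (L (Pi.single j 1)))) := by
        rw [map_mul, hφX, hφX]; ring
      have hk : Λ₂ ((t i • s) * lf (L (Pi.single j 1)) + (t j • s) * lf (L (Pi.single i 1)) +
          (φ (X i) - lf (L (Pi.single i 1))) * (φ (X j) - lf (L (Pi.single j 1)))) = 0 := by
        apply g2.kill
        refine add_mem (add_mem ?_ ?_) ?_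
        · exact mul_mem_add (hsM _) (lf_mem1 _) le_rfl
        · exact mul_mem_add (hsM _) (lf_mem1 _) le_rfl
        · exact mul_mem_add (hφX2 i) (hφX2 j) le_rfl
      rw [e, map_add, hk, map_add, map_add, hfv, hfv]
      have h1 := hBB (Pi.single i 1) (Pi.single j 1)
      rw [lf_single, lf_single] at h1
      linear_combination h1
    · intro i j k
      simp only [LinearMap.sub_apply, LinearMap.comp_apply, LinearMap.smul_apply, AlgHom.toLinearMap_apply, smul_eq_mul]
      have h := g2.kill _ (prod3_sub (hφX1 i) (hφX1 j) (lf_mem _) (hφX1 k) (lf_mem _) (hφX2 i) (hφX2 j) (hφX2 k))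
      have h1 := hT (Pi.single i 1) (Pi.single j 1) (Pi.single k 1)
      rw [lf_single, lf_single, lf_single] at h1
      rw [map_sub] at h
      rw [map_mul φ, map_mul φ]
      linear_combination h + h1
    · intro r hr
      simp only [LinearMap.sub_apply, LinearMap.comp_apply, LinearMap.smul_apply, AlgHom.toLinearMap_apply, smul_eq_mul]
      rw [g1.kill r hr, g2.kill _ (hφM' 4 r hr)]; simp

theorem transfer [CharZero K] {Λ₁ Λ₂ Λ₁' Λ₂' : MvPolynomial (Fin m) K →ₗ[K] K}
    (g1 : Good Λ₁) (g2 : Good Λ₂) (g1' : Good Λ₁') (g2' : Good Λ₂')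
    (e1 : ∀ p ∈ idealOfVars (Fin m) K ^ 3, Λ₁ p = Λ₁' p)
    (e2 : ∀ p ∈ idealOfVars (Fin m) K ^ 3, Λ₂ p = Λ₂' p)
    (hE : ∀ c : K, c ≠ 0 → Module.finrank K (WW Λ₁) = Module.finrank K (WW Λ₂) →
      ∃ E : WW Λ₁ ≃ₗ[K] WW Λ₂, ∀ x y : WW Λ₁,
        Λ₂ (lf (E x : Fin m → K) * lf (E y : Fin m → K)) = c * Λ₁ (lf (x : Fin m → K) * lf (y : Fin m → K)))
    (h : Nonempty ((MvPolynomial (Fin m) K ⧸ II Λ₁') ≃ₐ[K] (MvPolynomial (Fin m) K ⧸ II Λ₂'))) :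
    Nonempty ((MvPolynomial (Fin m) K ⧸ II Λ₁) ≃ₐ[K] (MvPolynomial (Fin m) K ⧸ II Λ₂)) := by
  obtain ⟨Ψ⟩ := h
  have hM : ∀ u v w : Fin m → K, lf u * lf v * lf w ∈ idealOfVars (Fin m) K ^ 3 := fun u v w =>
    mul_mem_add (mul_mem_add (lf_mem1 u) (lf_mem1 v) le_rfl) (lf_mem1 w) le_rfl
  obtain ⟨L, c, hc, hL⟩ := exists_L g1' g2' Ψ
  obtain ⟨L', c', hc', hL'⟩ := exists_L g2' g1' Ψ.symm
  simp only [← e1 _ (hM _ _ _), ← e2 _ (hM _ _ _)] at hL hL'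
  have hf := le_antisymm (finrank_le L' c' hc' hL') (finrank_le L c hc hL)
  obtain ⟨E, hE⟩ := hE c hc hf
  obtain ⟨N, hN, hNT⟩ := exists_equiv L c hc hL E
  refine main_iso g1 g2 N c hc hNT ?_
  intro u hu v hv
  have := hE ⟨u, hu⟩ ⟨v, hv⟩
  rwa [← hN, ← hN] at this

theorem isometry_of_lin [IsAlgClosed K] [CharZero K] {Λ₁ Λ₂ : MvPolynomial (Fin m) K →ₗ[K] K}
    (g1 : Good Λ₁) (g2 : Good Λ₂) (h1 : ∀ p ∈ II Λ₁, lin p = 0) (h2 : ∀ p ∈ II Λ₂, lin p = 0)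
    (c : K) (hc : c ≠ 0) (h : Module.finrank K (WW Λ₁) = Module.finrank K (WW Λ₂)) :
    ∃ E : WW Λ₁ ≃ₗ[K] WW Λ₂, ∀ x y : WW Λ₁,
        Λ₂ (lf (E x : Fin m → K) * lf (E y : Fin m → K)) = c * Λ₁ (lf (x : Fin m → K) * lf (y : Fin m → K)) := by
  let b (Λ : MvPolynomial (Fin m) K →ₗ[K] K) : LinearMap.BilinForm K (WW Λ) :=
    ((LinearMap.mul K (MvPolynomial (Fin m) K)).compr₂ Λ).compl₁₂ (lf ∘ₗ (WW Λ).subtype) (lf ∘ₗ (WW Λ).subtype)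
  have hb : ∀ Λ (x y : WW Λ), b Λ x y = Λ (lf (x : Fin m → K) * lf (y : Fin m → K)) := fun Λ x y => rfl
  obtain ⟨E, hE⟩ := exists_isometry h (c • b Λ₁) (b Λ₂) (fun x y => by
      simp only [LinearMap.smul_apply, hb]; rw [mul_comm (lf _)]) (fun x y => by
      simp only [hb]; rw [mul_comm (lf _)]) (fun x hx => by
      refine Subtype.ext (nondeg g1 h1 x.2 fun w hw => ?_)
      have := hx ⟨w, hw⟩
      simp only [LinearMap.smul_apply, hb, smul_eq_mul] at this
      exact (mul_eq_zero.1 this).resolve_left hc) (fun x hx => by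
      refine Subtype.ext (nondeg g2 h2 x.2 fun w hw => ?_)
      exact hx ⟨w, hw⟩)
  exact ⟨E, fun x y => hE x y⟩





/-- functional attached to a polynomial, on power series -/
noncomputable def lamS (F : MvPolynomial (Fin m) K) : MvPowerSeries (Fin m) K →ₗ[K] K :=
  ∑ β ∈ F.support, (coeff β F * ∏ i, ((β i).factorial : K)) • MvPowerSeries.coeff β

theorem lamS_apply (F : MvPolynomial (Fin m) K) (f) : lamS F f =
    ∑ β ∈ F.support, (coeff β F * ∏ i, ((β i).factorial : K)) * MvPowerSeries.coeff β f := by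
  simp [lamS, LinearMap.sum_apply]

noncomputable def lam (F : MvPolynomial (Fin m) K) : MvPolynomial (Fin m) K →ₗ[K] K :=
  lamS F ∘ₗ (coeToMvPowerSeries.algHom K).toLinearMap

theorem lam_eq (F p : MvPolynomial (Fin m) K) : lam F p = lamS F (p : MvPowerSeries (Fin m) K) := by
  simp [lam]

theorem lam_apply (F p : MvPolynomial (Fin m) K) : lam F p =
    ∑ β ∈ F.support, (coeff β F * ∏ i, ((β i).factorial : K)) * coeff β p := by
  rw [lam_eq, lamS_apply]; simp

theorem contract_apply (f : MvPowerSeries (Fin m) K) (F : MvPolynomial (Fin m) K) :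
    contract f F = ∑ β ∈ F.support, coeff β F • ∑ α ∈ Finset.Iic β,
      (MvPowerSeries.coeff α f * ∏ i, ((β i).descFactorial (α i) : K)) •
        MvPolynomial.monomial (β - α) (1 : K) := by
  conv_lhs => rw [F.as_sum]
  rw [map_sum]
  refine Finset.sum_congr rfl fun β _ => ?_
  have h1 : monomial β (coeff β F) = coeff β F • monomial β (1 : K) := by
    rw [smul_monomial, smul_eq_mul, mul_one]
  rw [h1, map_smul]
  congr 1
  have := (MvPolynomial.basisMonomials (Fin m) K).constr_basis K (fun β =>
    ∑ α ∈ Finset.Iic β,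
      (MvPowerSeries.coeff α f * ∏ i, ((β i).descFactorial (α i) : K)) •
        MvPolynomial.monomial (β - α) (1 : K)) β
  rw [coe_basisMonomials] at this
  exact this

theorem coeff_contract (f : MvPowerSeries (Fin m) K) (F : MvPolynomial (Fin m) K) (γ : Fin m →₀ ℕ) :
    coeff γ (contract f F) * ∏ i, ((γ i).factorial : K) = lamS F (MvPowerSeries.monomial γ 1 * f) := by
  classical
  rw [contract_apply, lamS_apply, coeff_sum, Finset.sum_mul]
  refine Finset.sum_congr rfl fun β _ => ?_
  rw [coeff_smul, smul_eq_mul, mul_assoc, mul_assoc]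
  congr 1
  rw [coeff_sum, MvPowerSeries.coeff_monomial_mul]
  simp only [coeff_smul, coeff_monomial, smul_eq_mul, one_mul]
  split_ifs with h
  · rw [Finset.sum_eq_single (β - γ)]
    · rw [tsub_tsub_cancel_of_le h, if_pos rfl, mul_one, mul_assoc, ← Finset.prod_mul_distrib, mul_comm]
      congr 1
      refine Finset.prod_congr rfl fun i _ => ?_
      have := Nat.factorial_mul_descFactorial (n := β i) (k := β i - γ i) (Nat.sub_le _ _)
      rw [Nat.sub_sub_self (h i)] at this
      rw [← this, Finsupp.tsub_apply]; push_cast; ring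
    · intro α hα hne
      rw [if_neg, mul_zero]
      rintro rfl
      rw [Finset.mem_Iic] at hα
      exact hne (tsub_tsub_cancel_of_le hα).symm
    · intro hn; exact absurd (Finset.mem_Iic.2 tsub_le_self) hn
  · rw [Finset.sum_eq_zero, zero_mul, mul_zero]
    intro α hα
    rw [if_neg, mul_zero]
    rintro rfl
    exact h tsub_le_self

theorem mem_annR_iff [CharZero K] (F : MvPolynomial (Fin m) K) (f) :
    f ∈ annR F ↔ ∀ u, lamS F (u * f) = 0 := by
  have hfac : ∀ γ : Fin m →₀ ℕ, (∏ i, ((γ i).factorial : K)) ≠ 0 := fun γ =>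
    Finset.prod_ne_zero_iff.2 fun i _ => Nat.cast_ne_zero.2 (Nat.factorial_ne_zero _)
  constructor
  · intro h u
    have h1 := coeff_contract (u * f) F 0
    have h2 : contract (u * f) F = 0 := h u
    rw [h2, show (MvPowerSeries.monomial (0 : Fin m →₀ ℕ) (1 : K)) = 1 from rfl, one_mul] at h1
    simpa using h1.symm
  · intro h u
    ext γ
    have h1 := coeff_contract (u * f) F γ
    rw [← mul_assoc, h] at h1
    simpa using (mul_eq_zero.1 h1).resolve_right (hfac γ)

theorem lamS_high {F : MvPolynomial (Fin m) K} (hF : ∀ β ∈ F.support, β.degree < 4)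
    {f : MvPowerSeries (Fin m) K} (hf : ∀ β : Fin m →₀ ℕ, β.degree < 4 → MvPowerSeries.coeff β f = 0)
    (u : MvPowerSeries (Fin m) K) : lamS F (u * f) = 0 := by
  classical
  rw [lamS_apply]
  refine Finset.sum_eq_zero fun β hβ => ?_
  rw [MvPowerSeries.coeff_mul, Finset.sum_eq_zero, mul_zero]
  rintro ⟨a, b⟩ hab
  rw [Finset.HasAntidiagonal.mem_antidiagonal] at hab
  have := hF β hβ
  rw [← hab, map_add] at this
  simp only at this ⊢
  rw [hf b (by omega), mul_zero]

theorem sub_trunc (f : MvPowerSeries (Fin m) K) (β : Fin m →₀ ℕ) (hβ : β.degree < 4) :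
    MvPowerSeries.coeff β (f - ((MvPowerSeries.truncTotal 4 f : MvPolynomial (Fin m) K) : MvPowerSeries (Fin m) K)) = 0 := by
  rw [map_sub, coeff_coe, MvPowerSeries.coeff_truncTotal _ hβ, sub_self]

theorem coe_mem_annR [CharZero K] {F : MvPolynomial (Fin m) K} (hF : ∀ β ∈ F.support, β.degree < 4)
    (p : MvPolynomial (Fin m) K) : (p : MvPowerSeries (Fin m) K) ∈ annR F ↔ p ∈ II (lam F) := by
  rw [mem_annR_iff, mem_II]
  constructor
  · intro h u
    rw [lam_eq, coe_mul]; exact h _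
  · intro h u
    have h1 := h (MvPowerSeries.truncTotal 4 u)
    rw [lam_eq, coe_mul] at h1
    have h2 := lamS_high hF (sub_trunc u) p
    rw [mul_comm, sub_mul, map_sub, h1, sub_zero] at h2
    exact h2

theorem sub_trunc_mem [CharZero K] {F : MvPolynomial (Fin m) K} (hF : ∀ β ∈ F.support, β.degree < 4)
    (f : MvPowerSeries (Fin m) K) : f - ((MvPowerSeries.truncTotal 4 f : MvPolynomial (Fin m) K) : MvPowerSeries (Fin m) K) ∈ annR F := by
  rw [mem_annR_iff]
  exact lamS_high hF (sub_trunc f)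

theorem quot_equiv [CharZero K] {F : MvPolynomial (Fin m) K} (hF : ∀ β ∈ F.support, β.degree < 4) :
    Nonempty ((MvPolynomial (Fin m) K ⧸ II (lam F)) ≃ₐ[K] (MvPowerSeries (Fin m) K ⧸ annR F)) := by
  let g : MvPolynomial (Fin m) K →ₐ[K] MvPowerSeries (Fin m) K ⧸ annR F :=
    (Ideal.Quotient.mkₐ K (annR F)).comp (coeToMvPowerSeries.algHom K)
  have hg0 : ∀ p, g p = Ideal.Quotient.mk (annR F) (p : MvPowerSeries (Fin m) K) := fun p => by
    simp [g]
  have hg : Function.Surjective g := by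
    intro y
    obtain ⟨f, rfl⟩ := Ideal.Quotient.mk_surjective y
    refine ⟨MvPowerSeries.truncTotal 4 f, ?_⟩
    rw [hg0]
    symm
    exact Ideal.Quotient.eq.2 (sub_trunc_mem hF f)
  have hk : RingHom.ker g = II (lam F) := by
    ext p
    rw [← coe_mem_annR hF, RingHom.mem_ker, hg0, Ideal.Quotient.eq_zero_iff_mem]
  exact ⟨(Ideal.quotientEquivAlgOfEq K hk.symm).trans (Ideal.quotientKerAlgEquivOfSurjective hg)⟩

theorem good_lam [CharZero K] {F : MvPolynomial (Fin m) K} (hF : ∀ β ∈ F.support, β.degree < 4)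
    (h3 : ∃ β : Fin m →₀ ℕ, β.degree = 3 ∧ coeff β F ≠ 0) : Good (lam F) := by
  classical
  refine ⟨fun p hp => ?_, ?_⟩
  · rw [mem_pow_idealOfVars_iff'] at hp
    rw [lam_apply]
    refine Finset.sum_eq_zero fun β hβ => ?_
    rw [hp β (hF β hβ), mul_zero]
  · obtain ⟨β, hβ, hβF⟩ := h3
    have hfac : (coeff β F * ∏ i, ((β i).factorial : K)) ≠ 0 := mul_ne_zero hβF
      (Finset.prod_ne_zero_iff.2 fun i _ => Nat.cast_ne_zero.2 (Nat.factorial_ne_zero _))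
    refine ⟨monomial β (coeff β F * ∏ i, ((β i).factorial : K))⁻¹, ?_, ?_⟩
    · rw [monomial_mem_pow_idealOfVars_iff _ _ (inv_ne_zero hfac)]; omega
    · rw [lam_apply, Finset.sum_eq_single β]
      · rw [coeff_monomial, if_pos rfl, mul_inv_cancel₀ hfac]
      · intro γ _ hγ
        rw [coeff_monomial, if_neg hγ.symm, mul_zero]
      · intro h; exact absurd (mem_support_iff.2 hβF) h

theorem lam_add (F G : MvPolynomial (Fin m) K) (p) : lam (F + G) p = lam F p + lam G p := by
  classical
  have h : ∀ (H : MvPolynomial (Fin m) K) (S : Finset (Fin m →₀ ℕ)), H.support ⊆ S → lam H p =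
    ∑ β ∈ S, (coeff β H * ∏ i, ((β i).factorial : K)) * coeff β p := by
    intro H S hS
    rw [lam_apply]
    refine Finset.sum_subset hS fun β _ hβ => ?_
    rw [notMem_support_iff.1 hβ]; simp
  rw [h (F + G) (F.support ∪ G.support) support_add, h F (F.support ∪ G.support) Finset.subset_union_left,
    h G (F.support ∪ G.support) Finset.subset_union_right, ← Finset.sum_add_distrib]
  refine Finset.sum_congr rfl fun β _ => ?_
  rw [coeff_add]; ring

theorem lin_zero [CharZero K] {F : MvPolynomial (Fin m) K} (hF : ∀ β ∈ F.support, β.degree < 4)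
    (h0 : hilbQ (annR F) 0 = 1) (h1 : hilbQ (annR F) 1 = m) :
    ∀ p ∈ II (lam F), p ∈ idealOfVars (Fin m) K → lin p = 0 := by
  intro p hp hpM
  rcases Nat.eq_zero_or_pos m with hm | hm
  · subst hm; exact Subsingleton.elim _ _
  have hr0 : Module.finrank K (MvPowerSeries (Fin m) K ⧸ (annR F ⊔ mxR K m ^ 0)) = 0 := by
    have : annR F ⊔ mxR K m ^ 0 = ⊤ := by simp
    rw [this]
    haveI : Subsingleton (MvPowerSeries (Fin m) K ⧸ (⊤ : Ideal (MvPowerSeries (Fin m) K))) :=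
      Ideal.Quotient.subsingleton_iff.2 rfl
    exact Module.finrank_zero_of_subsingleton
  unfold hilbQ at h0 h1
  rw [hr0] at h0
  have hr2 : Module.finrank K (MvPowerSeries (Fin m) K ⧸ (annR F ⊔ mxR K m ^ 2)) = m + 1 := by
    change Module.finrank K (MvPowerSeries (Fin m) K ⧸ (annR F ⊔ mxR K m ^ 1)) - 0 = 1 at h0
    change Module.finrank K (MvPowerSeries (Fin m) K ⧸ (annR F ⊔ mxR K m ^ 2)) -
      Module.finrank K (MvPowerSeries (Fin m) K ⧸ (annR F ⊔ mxR K m ^ 1)) = m at h1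
    omega
  have hsq : ∀ q ∈ idealOfVars (Fin m) K ^ 2, (q : MvPowerSeries (Fin m) K) ∈ mxR K m ^ 2 := by
    intro q hq
    have h := Ideal.mem_map_of_mem (coeToMvPowerSeries.ringHom (σ := Fin m) (R := K)) hq
    rw [Ideal.map_pow] at h
    refine Ideal.pow_right_mono ?_ 2 h
    rw [idealOfVars, Ideal.map_span, Ideal.span_le]
    rintro _ ⟨_, ⟨i, rfl⟩, rfl⟩
    simp [mxR]
  let T : (K × (Fin m → K)) →ₗ[K] MvPolynomial (Fin m) K :=
    (Algebra.linearMap K (MvPolynomial (Fin m) K)).coprod lf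
  let θ : (K × (Fin m → K)) →ₗ[K] (MvPowerSeries (Fin m) K ⧸ (annR F ⊔ mxR K m ^ 2)) :=
    (Ideal.Quotient.mkₐ K (annR F ⊔ mxR K m ^ 2)).toLinearMap ∘ₗ
      (coeToMvPowerSeries.algHom K).toLinearMap ∘ₗ T
  have hθ : ∀ c v, θ (c, v) = Ideal.Quotient.mk (annR F ⊔ mxR K m ^ 2)
      ((C c + lf v : MvPolynomial (Fin m) K) : MvPowerSeries (Fin m) K) := fun c v => by
    simp [θ, T, algebraMap_eq]
  have hsurj : Function.Surjective θ := by
    intro y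
    obtain ⟨f, rfl⟩ := Ideal.Quotient.mk_surjective y
    set q : MvPolynomial (Fin m) K := MvPowerSeries.truncTotal 4 f with hqdef
    refine ⟨(constantCoeff q, lin q), ?_⟩
    rw [hθ]
    symm
    refine Ideal.Quotient.eq.2 ?_
    have e : f - ((C (constantCoeff q) + lf (lin q) : MvPolynomial (Fin m) K) : MvPowerSeries (Fin m) K)
      = (f - q) + ((q - C (constantCoeff q) - lf (lin q) : MvPolynomial (Fin m) K) : MvPowerSeries (Fin m) K) := by
      have : q = (C (constantCoeff q) + lf (lin q)) + (q - C (constantCoeff q) - lf (lin q)) := by ring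
      conv_rhs => enter [1]; rw [this]
      rw [coe_add _ (q - C (constantCoeff q) - lf (lin q))]
      ring
    rw [e]
    exact add_mem (Ideal.mem_sup_left (sub_trunc_mem hF f)) (Ideal.mem_sup_right (hsq _ (sub_lin_mem q)))
  haveI : FiniteDimensional K (MvPowerSeries (Fin m) K ⧸ (annR F ⊔ mxR K m ^ 2)) :=
    Module.Finite.of_surjective θ hsurj
  have hinj : Function.Injective θ := by
    refine (LinearMap.injective_iff_surjective_of_finrank_eq_finrank ?_).2 hsurj
    rw [hr2]; simp [add_comm]
  have hz : θ (0, lin p) = 0 := by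
    rw [hθ, Ideal.Quotient.eq_zero_iff_mem]
    have e : ((C 0 + lf (lin p) : MvPolynomial (Fin m) K) : MvPowerSeries (Fin m) K) =
      (p : MvPowerSeries (Fin m) K) - ((p - lf (lin p) : MvPolynomial (Fin m) K) : MvPowerSeries (Fin m) K) := by
      have : p = (C 0 + lf (lin p)) + (p - lf (lin p)) := by rw [C_0]; ring
      conv_rhs => enter [1]; rw [this]
      rw [coe_add _ (p - lf (lin p))]
      ring
    rw [e]
    exact sub_mem (Ideal.mem_sup_left ((coe_mem_annR hF p).2 hp)) (Ideal.mem_sup_right (hsq _ (sub_lf_mem hpM)))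
  have := (injective_iff_map_eq_zero θ).1 hinj _ hz
  exact (Prod.ext_iff.1 this).2

theorem final_setup [CharZero K] {F F3 : MvPolynomial (Fin m) K}
    (hF3 : F3.IsHomogeneous 3) (hF3ne : F3 ≠ 0) (hFtop : (F - F3).totalDegree ≤ 2) :
    (∀ β ∈ F.support, β.degree < 4) ∧ (∀ β ∈ F3.support, β.degree < 4) ∧
    Good (lam F) ∧ Good (lam F3) ∧ (∀ p ∈ idealOfVars (Fin m) K ^ 3, lam F p = lam F3 p) ∧
    (∀ u v, lam F3 (lf u * lf v) = 0) := by
  have h3 : ∀ β, coeff β F3 ≠ 0 → β.degree = 3 := fun β hβ => by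
    rw [Finsupp.degree_eq_weight_one]; exact hF3 hβ
  have hd : ∀ β : Fin m →₀ ℕ, 2 < β.degree → coeff β (F - F3) = 0 := fun β hβ => by
    apply coeff_eq_zero_of_totalDegree_lt
    exact lt_of_le_of_lt hFtop hβ
  have hc : ∀ β : Fin m →₀ ℕ, 2 < β.degree → coeff β F = coeff β F3 := fun β hβ => by
    have := hd β hβ
    rwa [coeff_sub, sub_eq_zero] at this
  have s3 : ∀ β ∈ F3.support, β.degree < 4 := fun β hβ => by
    rw [h3 β (mem_support_iff.1 hβ)]; norm_num
  have s : ∀ β ∈ F.support, β.degree < 4 := fun β hβ => by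
    by_contra! h
    have h1 := hc β (by omega)
    rw [mem_support_iff, h1] at hβ
    have := h3 β hβ
    omega
  obtain ⟨β, hβ⟩ := ne_zero_iff.1 hF3ne
  refine ⟨s, s3, good_lam s ⟨β, h3 β hβ, ?_⟩, good_lam s3 ⟨β, h3 β hβ, hβ⟩, ?_, ?_⟩
  · rw [hc β (by rw [h3 β hβ]; norm_num)]; exact hβ
  · intro p hp
    have e : F = F3 + (F - F3) := by ring
    rw [e, lam_add]
    have : lam (F - F3) p = 0 := by
      rw [lam_apply]
      refine Finset.sum_eq_zero fun γ hγ => ?_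
      rw [mem_pow_idealOfVars_iff'] at hp
      rw [hp γ, mul_zero]
      by_contra! h
      exact (mem_support_iff.1 hγ) (hd γ (by omega))
    rw [this, add_zero]
  · intro u v
    have hl : ∀ v : Fin m → K, (lf v).IsHomogeneous 1 := fun v => by
      rw [lf_apply]
      refine IsHomogeneous.sum _ _ _ fun i _ => ?_
      rw [smul_eq_C_mul]
      simpa using (isHomogeneous_C (Fin m) (v i)).mul (isHomogeneous_X K i)
    rw [lam_apply]
    refine Finset.sum_eq_zero fun γ hγ => ?_
    have h2 := h3 γ (mem_support_iff.1 hγ)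
    rw [((hl u).mul (hl v)).coeff_eq_zero, mul_zero]
    rw [h2]; norm_num

end GorAux

/-- For `m ≥ n` and degree-three polynomials `F, G ∈ K[y_1,…,y_m]` with
top-degree forms `F_3, G_3`, if `A_F` and `A_G` have Hilbert function
`{1,m,n,1}`, then `A_F ≅ A_G` as `K`-algebras iff
`Q_{A_F}(0) = R/Ann_R(F_3)` and `Q_{A_G}(0) = R/Ann_R(G_3)` are isomorphic as
`K`-algebras. -/
theorem aF_iso_iff_q0_iso
    {K : Type*} [Field K] [IsAlgClosed K] [CharZero K] {m n : ℕ} (hnm : n ≤ m)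
    (F G F3 G3 : MvPolynomial (Fin m) K)
    (hF3 : F3.IsHomogeneous 3) (hF3ne : F3 ≠ 0) (hFtop : (F - F3).totalDegree ≤ 2)
    (hG3 : G3.IsHomogeneous 3) (hG3ne : G3 ≠ 0) (hGtop : (G - G3).totalDegree ≤ 2)
    (hF0 : hilbQ (annR F) 0 = 1) (hF1 : hilbQ (annR F) 1 = m)
    (hF2 : hilbQ (annR F) 2 = n) (hFs : hilbQ (annR F) 3 = 1)
    (hFm : mxR K m ^ 4 ≤ annR F)
    (hG0 : hilbQ (annR G) 0 = 1) (hG1 : hilbQ (annR G) 1 = m)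
    (hG2 : hilbQ (annR G) 2 = n) (hGs : hilbQ (annR G) 3 = 1)
    (hGm : mxR K m ^ 4 ≤ annR G) :
    Nonempty ((MvPowerSeries (Fin m) K ⧸ annR F) ≃ₐ[K]
        (MvPowerSeries (Fin m) K ⧸ annR G)) ↔
      Nonempty ((MvPowerSeries (Fin m) K ⧸ annR F3) ≃ₐ[K]
        (MvPowerSeries (Fin m) K ⧸ annR G3)) := by
  obtain ⟨sF, sF3, gF, gF3, eF, qF⟩ := GorAux.final_setup hF3 hF3ne hFtop
  obtain ⟨sG, sG3, gG, gG3, eG, qG⟩ := GorAux.final_setup hG3 hG3ne hGtop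
  obtain ⟨iF⟩ := GorAux.quot_equiv sF
  obtain ⟨iF3⟩ := GorAux.quot_equiv sF3
  obtain ⟨iG⟩ := GorAux.quot_equiv sG
  obtain ⟨iG3⟩ := GorAux.quot_equiv sG3
  constructor
  · rintro ⟨Ψ⟩
    obtain ⟨Ψ'⟩ := GorAux.transfer gF3 gG3 gF gG (fun p hp => (eF p hp).symm) (fun p hp => (eG p hp).symm)
      (fun c _ h => by
        obtain ⟨E⟩ := FiniteDimensional.nonempty_linearEquiv_of_finrank_eq h
        exact ⟨E, fun x y => by rw [qF, qG, mul_zero]⟩) ⟨(iF.trans Ψ).trans iG.symm⟩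
    exact ⟨(iF3.symm.trans Ψ').trans iG3⟩
  · rintro ⟨Ψ⟩
    obtain ⟨Ψ'⟩ := GorAux.transfer gF gG gF3 gG3 eF eG
      (fun c hc h => GorAux.isometry_of_lin gF gG
        (fun p hp => GorAux.lin_zero sF hF0 hF1 p hp (GorAux.II_le gF hp))
        (fun p hp => GorAux.lin_zero sG hG0 hG1 p hp (GorAux.II_le gG hp)) c hc h)
      ⟨(iF3.trans Ψ).trans iG3.symm⟩
    exact ⟨(iF.symm.trans Ψ').trans iG⟩
end
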